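/- arXiv:2212.09933 — 2 statements merged into one kernel-verified Lean document; each statement's English description precedes it below -/
import Mathlib

section
/- Let n ≥ 4 be even, let w be a one-dimensional isotropic subspace of (ZMod 2)^{2n}, and let G_w be the graph whose vertices are the maximal isotropic subspaces x with w ⊆ x, with x adjacent to y iff dim(x∩y) = n/2. Then the spectral ratio of G_w equals 2^{−n/2}; i.e. λ(G_w)/max Spec(G_w) = 2^{−n/2}. -/
open Finset

abbrev F2 := ZMod 2
/-- `F2^{2n}`, split into the first and last `n` coordinates. -/
abbrev PV (n : ℕ) := (Fin n → F2) × (Fin n → F2)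

/-- Symplectic product on `F2^{2n}`: zero iff `a₁·b₂ = a₂·b₁`. -/
def symp {n : ℕ} (a b : PV n) : F2 :=
  (∑ i, a.1 i * b.2 i) + (∑ i, a.2 i * b.1 i)

/-- A subspace is isotropic if the symplectic product vanishes on it. -/
def IsIsotropic {n : ℕ} (S : Submodule F2 (PV n)) : Prop :=
  ∀ x ∈ S, ∀ y ∈ S, symp x y = 0

/-- `Lset n k` = `L^n_k`, the set of `k`-dimensional isotropic subspaces of `F2^{2n}`. -/
def Lset (n k : ℕ) : Set (Submodule F2 (PV n)) :=
  {S | IsIsotropic S ∧ Module.finrank F2 S = k}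

/-- Integer lift of a vector over `F2`, with values in `{0,1} ⊆ ℤ`. -/
def liftZ {n : ℕ} (v : Fin n → F2) : Fin n → ℤ := fun i => ((v i).val : ℤ)

def dotZ {n : ℕ} (a b : Fin n → ℤ) : ℤ := ∑ i, a i * b i

/-- The phase `i^{x̂₁·x̂₂} · i^{ŷ₁·ŷ₂} · i^{−((x+y)^^₁·(x+y)^^₂)} · (−1)^{x̂₂·ŷ₁}`. -/
noncomputable def phase {n : ℕ} (x y : PV n) : ℂ :=
  Complex.I ^ (dotZ (liftZ x.1) (liftZ x.2)) *
  Complex.I ^ (dotZ (liftZ y.1) (liftZ y.2)) *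
  Complex.I ^ (-(dotZ (liftZ (x + y).1) (liftZ (x + y).2))) *
  (-1 : ℂ) ^ (dotZ (liftZ x.2) (liftZ y.1))

/-- `w(x,y) ∈ {0,1} ⊆ F2`: zero iff the phase equals `1`. -/
noncomputable def wght {n : ℕ} (x y : PV n) : F2 :=
  if phase x y = 1 then 0 else 1

/-- An outcome of an isotropic subspace `S` is `f : S → F2` with
`f(x+y) = f(x)+f(y)+w(x,y)`. -/
def IsOutcome {n : ℕ} (S : Submodule F2 (PV n)) (f : S → F2) : Prop :=
  ∀ x y : S, f (x + y) = f x + f y + wght (x : PV n) (y : PV n)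

/-- Two outcomes are consistent if they agree on the intersection of their domains. -/
def ConsistentOn {n : ℕ} {S₁ S₂ : Submodule F2 (PV n)} (f₁ : S₁ → F2) (f₂ : S₂ → F2) : Prop :=
  ∀ v (h1 : v ∈ S₁) (h2 : v ∈ S₂), f₁ ⟨v, h1⟩ = f₂ ⟨v, h2⟩

open scoped Classical

noncomputable instance {n : ℕ} : Fintype (Submodule F2 (PV n)) := by
  have : Finite (Submodule F2 (PV n)) :=
    Finite.of_injective (fun S => (S : Set (PV n))) SetLike.coe_injective
  exact Fintype.ofFinite _

/-- Adjacency matrix (over `ℝ`) of the graph with adjacency relation `Adj`. -/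
noncomputable def adjMat {V : Type*} [Fintype V] (Adj : V → V → Prop) : Matrix V V ℝ :=
  fun x y => if Adj x y then 1 else 0

/-- The set of eigenvalues of a matrix. -/
def eigSet {V : Type*} [Fintype V] (A : Matrix V V ℝ) : Set ℝ :=
  {μ | ∃ v : V → ℝ, v ≠ 0 ∧ A.mulVec v = μ • v}

/-- The largest eigenvalue. -/
noncomputable def maxEig {V : Type*} [Fintype V] (A : Matrix V V ℝ) : ℝ :=
  sSup (eigSet A)

/-- The spectral parameter: the second largest element of `{|μ| : μ ∈ Spec(A)}`. -/
noncomputable def specParam {V : Type*} [Fintype V] (A : Matrix V V ℝ) : ℝ :=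
  sSup ((abs '' eigSet A) \ {sSup (abs '' eigSet A)})

/-- Vertices of `G_w`: the maximal isotropic subspaces of `F2^{2n}` containing `w`. -/
abbrev GVtx (n : ℕ) (w : Submodule F2 (PV n)) :=
  {x : Submodule F2 (PV n) // x ∈ Lset n n ∧ w ≤ x}

/-- The adjacency matrix of the graph on `GVtx n w` where `x ∼ y` iff `dim(x∩y) = k`. -/
noncomputable def adjG (n : ℕ) (w : Submodule F2 (PV n)) (k : ℕ) :
    Matrix (GVtx n w) (GVtx n w) ℝ :=
  adjMat (fun x y => Module.finrank F2 ↥(x.1 ⊓ y.1) = k)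

/-!
Lagrangian subspaces of a `2n`-dimensional symplectic space over a field with `q` elements that
contain a fixed isotropic `w` are the vertices of a dual polar graph of diameter `m = n - dim w`,
with distance `dim x - dim (x ⊓ y)`. Every line of this geometry (the `q + 1` Lagrangians through a
hyperplane of a Lagrangian) has a unique point nearest to a given `y`. Counting along lines, the
distance matrices satisfy a three-term recurrence, so `A_j = P_j(A_1)` for explicit polynomials
`P_j`, and `P_{m+1}(A_1) = 0`.

Write `[k] = 1 + q + ⋯ + q^(k-1)`. The recurrence for `P_j(θ)` at `θ = q[a] - [b]`, `a + b = m`,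
says that the generating function `∑_j P_j(θ) X^j` satisfies the `q`-difference equation solved by
`∏_{l < a} (1 + q^(l+1) X) * ∏_{l < b} (1 - q^l X)`. Its coefficient of `X^(m+1)` is `0`; this
gives `m + 1` roots of `P_{m+1}`, hence all of them. Every eigenvalue of `A_j` is therefore a
coefficient of such a product. If `g` is the coefficient of `X^j` in `∏_{l < m} (1 + q^l X)`, then
`b = 0` gives the valency `q^j g`, `a = 0` gives `(-1)^j g`, and comparing the linear factors shows
that all products with `b > 0` have coefficients at most `g` in absolute value. Both values occur,
with eigenvectors depending only on the distance to a fixed vertex, so the ratio is `q^(-j)`.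
-/

namespace DualPolar

open scoped Polynomial
open Polynomial (C X)

/-- The `q`-analogue `[k] = 1 + q + ⋯ + q ^ (k - 1)` of the natural number `k`. -/
def qNumber {R : Type*} [CommSemiring R] (q : R) (k : ℕ) : R := ∑ i ∈ range k, q ^ i

section QNumber

lemma qNumber_zero {R : Type*} [CommSemiring R] (q : R) : qNumber q 0 = 0 := by
  simp [qNumber]

lemma sub_one_mul_qNumber {R : Type*} [CommRing R] (q : R) (k : ℕ) :
    (q - 1) * qNumber q k = q ^ k - 1 :=
  mul_geom_sum q k

lemma natCast_qNumber {R : Type*} [CommSemiring R] (q k : ℕ) :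
    ((qNumber q k : ℕ) : R) = qNumber (q : R) k := by
  simp [qNumber]

variable {q : ℝ}

lemma strictMono_qNumber (hq : 0 < q) : StrictMono (qNumber q) :=
  strictMono_nat_of_lt_succ fun k ↦ by
    rw [qNumber, qNumber, sum_range_succ]
    exact lt_add_of_pos_right _ (by positivity)

lemma qNumber_succ_pos (hq : 0 < q) (k : ℕ) : 0 < qNumber q (k + 1) :=
  (qNumber_zero q).symm.trans_lt (strictMono_qNumber hq k.succ_pos)

end QNumber

/-- The eigenvalue `q [a] - [b]` of the distance-one graph (the collinearity graph) of a symplectic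
dual polar space of rank `a + b`. -/
def collinearityEigenvalue {R : Type*} [CommRing R] (q : R) (a b : ℕ) : R :=
  q * qNumber q a - qNumber q b

section LinearFactors

variable {R : Type*} [CommSemiring R]

lemma coeff_mul_one_add_C_mul_X_zero (p : R[X]) (c : R) :
    (p * (1 + C c * X)).coeff 0 = p.coeff 0 := by
  simp [Polynomial.mul_coeff_zero]

lemma coeff_mul_one_add_C_mul_X_succ (p : R[X]) (c : R) (i : ℕ) :
    (p * (1 + C c * X)).coeff (i + 1) = p.coeff (i + 1) + c * p.coeff i := by
  rw [mul_add, mul_one, mul_left_comm, Polynomial.coeff_add, Polynomial.coeff_C_mul,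
    Polynomial.coeff_mul_X]

lemma abs_coeff_prod_one_add_C_mul_X_le {ι : Type*} (s : Finset ι) {u v : ι → ℝ}
    (h : ∀ l ∈ s, |u l| ≤ v l) (i : ℕ) :
    |(∏ l ∈ s, (1 + C (u l) * X)).coeff i| ≤ (∏ l ∈ s, (1 + C (v l) * X)).coeff i := by
  induction s using Finset.induction_on generalizing i with
  | empty => simp [Polynomial.coeff_one, apply_ite abs]
  | insert l s hl ih =>
    have hs := ih fun k hk ↦ h k (mem_insert_of_mem hk)
    rw [prod_insert hl, prod_insert hl, mul_comm, mul_comm (1 + _)]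
    cases i with
    | zero => simpa only [coeff_mul_one_add_C_mul_X_zero] using hs 0
    | succ i =>
      simp only [coeff_mul_one_add_C_mul_X_succ]
      refine (abs_add_le _ _).trans (add_le_add (hs _) ?_)
      rw [abs_mul]
      exact mul_le_mul (h l (mem_insert_self l s)) (hs i) (abs_nonneg _)
        ((abs_nonneg _).trans (h l (mem_insert_self l s)))

lemma coeff_prod_one_add_C_mul_X_pos {m i : ℕ} (hi : i ≤ m) {u : ℕ → ℝ} (hu : ∀ l, 0 < u l) :
    0 < (∏ l ∈ range m, (1 + C (u l) * X)).coeff i := by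
  have nonneg (k i : ℕ) : 0 ≤ (∏ l ∈ range k, (1 + C (u l) * X)).coeff i :=
    (abs_nonneg _).trans
      (abs_coeff_prod_one_add_C_mul_X_le _ (fun l _ ↦ (abs_of_pos (hu l)).le) i)
  induction m generalizing i with
  | zero => simp [Nat.le_zero.mp hi]
  | succ m ih =>
    rw [prod_range_succ]
    cases i with
    | zero => simpa only [coeff_mul_one_add_C_mul_X_zero] using ih (Nat.zero_le m)
    | succ i =>
      rw [coeff_mul_one_add_C_mul_X_succ]
      exact add_pos_of_nonneg_of_pos (nonneg _ _) (mul_pos (hu m) (ih (Nat.le_of_succ_le_succ hi)))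

end LinearFactors

section GeneratingFunction

/-- The generating function `∑ i, p i * X ^ i` of the eigenvalues `p i` of the distance-`i` graphs
of a symplectic dual polar space on the eigenspace belonging to `collinearityEigenvalue q a b`. -/
noncomputable def genFun {R : Type*} [CommRing R] (q : R) (a b : ℕ) : R[X] :=
  (∏ l ∈ range a, (1 + C (q ^ (l + 1)) * X)) * ∏ l ∈ range b, (1 + C (-q ^ l) * X)

variable {R : Type*} [CommRing R] {q : R} (a b : ℕ)

lemma genFun_comp_C_mul_X :
    (genFun q a b).comp (C q * X) * (1 + C q * X) * (1 + C (-1) * X) =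
      genFun q a b * (1 + C (q ^ (a + 1)) * X) * (1 + C (-q ^ b) * X) := by
  have shift_left : (∏ l ∈ range a, (1 + C (q ^ (l + 1)) * X)).comp (C q * X) * (1 + C q * X) =
      (∏ l ∈ range a, (1 + C (q ^ (l + 1)) * X)) * (1 + C (q ^ (a + 1)) * X) := by
    rw [← prod_range_succ, prod_range_succ', Polynomial.prod_comp]
    simp [pow_succ, mul_assoc]
  have shift_right : (∏ l ∈ range b, (1 + C (-q ^ l) * X)).comp (C q * X) * (1 + C (-1) * X) =
      (∏ l ∈ range b, (1 + C (-q ^ l) * X)) * (1 + C (-q ^ b) * X) := by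
    rw [← prod_range_succ, prod_range_succ', Polynomial.prod_comp]
    simp [pow_succ, mul_assoc]
  rw [genFun, Polynomial.mul_comp, mul_assoc, mul_mul_mul_comm, shift_left, shift_right,
    mul_mul_mul_comm, ← mul_assoc]

lemma coeff_genFun_zero : (genFun q a b).coeff 0 = 1 := by
  simp [genFun, Polynomial.coeff_zero_eq_eval_zero, Polynomial.eval_prod]

variable [IsDomain R]

lemma coeff_genFun_one (hq : q ≠ 1) : (genFun q a b).coeff 1 = collinearityEigenvalue q a b := by
  have h := congr_arg (Polynomial.coeff · (0 + 1)) (genFun_comp_C_mul_X (q := q) a b)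
  simp only [coeff_mul_one_add_C_mul_X_succ _ _ 0, coeff_mul_one_add_C_mul_X_zero,
    Polynomial.comp_C_mul_X_coeff, coeff_genFun_zero, zero_add] at h
  refine mul_left_cancel₀ (sub_ne_zero.mpr hq) ?_
  rw [collinearityEigenvalue]
  linear_combination h - q * sub_one_mul_qNumber q a + sub_one_mul_qNumber q b

lemma qNumber_mul_coeff_genFun (hq : q ≠ 1) (i : ℕ) :
    qNumber q (i + 2) * (genFun q a b).coeff (i + 2) =
      (collinearityEigenvalue q a b - (q ^ (i + 1) - 1)) * (genFun q a b).coeff (i + 1) -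
        q * (qNumber q (a + b) - qNumber q i) * (genFun q a b).coeff i := by
  have h := congr_arg (Polynomial.coeff · (i + 2)) (genFun_comp_C_mul_X (q := q) a b)
  simp only [coeff_mul_one_add_C_mul_X_succ, Polynomial.comp_C_mul_X_coeff] at h
  refine mul_left_cancel₀ (sub_ne_zero.mpr hq) ?_
  rw [collinearityEigenvalue]
  linear_combination h + (genFun q a b).coeff (i + 2) * sub_one_mul_qNumber q (i + 2) -
    (genFun q a b).coeff (i + 1) * (q * sub_one_mul_qNumber q a - sub_one_mul_qNumber q b) +
    q * (genFun q a b).coeff i * (sub_one_mul_qNumber q (a + b) - sub_one_mul_qNumber q i)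

end GeneratingFunction

section Extremes

variable {q : ℝ}

/-- The `q`-binomial product `∏ l < m, (1 + q ^ l * X)`; its coefficients are
`q ^ (i * (i - 1) / 2)` times Gaussian binomial coefficients. -/
noncomputable def qBinomialPoly (q : ℝ) (m : ℕ) : ℝ[X] := ∏ l ∈ range m, (1 + C (q ^ l) * X)

lemma coeff_genFun_right_zero (m i : ℕ) :
    (genFun q m 0).coeff i = q ^ i * (qBinomialPoly q m).coeff i := by
  have : genFun q m 0 = (qBinomialPoly q m).comp (C q * X) := by
    simp [genFun, qBinomialPoly, Polynomial.prod_comp, pow_succ, mul_assoc]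
  rw [this, Polynomial.comp_C_mul_X_coeff, mul_comm]

lemma coeff_genFun_left_zero (m i : ℕ) :
    (genFun q 0 m).coeff i = (-1) ^ i * (qBinomialPoly q m).coeff i := by
  have : genFun q 0 m = (qBinomialPoly q m).comp (C (-1) * X) := by
    simp [genFun, qBinomialPoly, Polynomial.prod_comp]
  rw [this, Polynomial.comp_C_mul_X_coeff, mul_comm]

lemma abs_coeff_genFun_succ_le (hq : 1 ≤ q) (a b i : ℕ) :
    |(genFun q a (b + 1)).coeff i| ≤ (qBinomialPoly q (a + (b + 1))).coeff i := by
  have : genFun q a (b + 1) = ∏ l ∈ range (b + 1 + a),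
      (1 + C (if l < b + 1 then -q ^ l else q ^ (l - b)) * X) := by
    rw [genFun, mul_comm, prod_range_add _ (b + 1) a]
    congr 1
    · exact prod_congr rfl fun l hl ↦ by rw [if_pos (mem_range.mp hl)]
    · refine prod_congr rfl fun l _ ↦ ?_
      rw [if_neg (by omega), show b + 1 + l - b = l + 1 by omega]
  rw [this, qBinomialPoly, add_comm a]
  refine abs_coeff_prod_one_add_C_mul_X_le _ (fun l _ ↦ ?_) i
  split_ifs
  · rw [abs_neg, abs_of_nonneg (by positivity)]
  · rw [abs_of_nonneg (by positivity)]
    exact pow_le_pow_right₀ hq (Nat.sub_le l b)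

end Extremes

section DistancePoly

/-- The polynomials `P_i` expressing the distance-`i` graph of a symplectic dual polar space of rank
`m` through its distance-one graph. The recurrence records the intersection numbers
`c_{i+2} = [i+2]`, `a_{i+1} = q^(i+1) - 1` and `b_i = q ([m] - [i])`. -/
noncomputable def distancePoly (q : ℝ) (m : ℕ) : ℕ → ℝ[X]
  | 0 => 1
  | 1 => X
  | i + 2 => C (qNumber q (i + 2))⁻¹ *
      ((X - C (q ^ (i + 1) - 1)) * distancePoly q m (i + 1) -
        C (q * (qNumber q m - qNumber q i)) * distancePoly q m i)

variable {q : ℝ}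

lemma degree_distancePoly (hq : 0 < q) (m : ℕ) : ∀ i, (distancePoly q m i).degree = i
  | 0 => Polynomial.degree_one
  | 1 => Polynomial.degree_X
  | i + 2 => by
    have main_term : ((X - C (q ^ (i + 1) - 1)) * distancePoly q m (i + 1)).degree = ↑(i + 2) := by
      rw [Polynomial.degree_mul, Polynomial.degree_X_sub_C, degree_distancePoly hq m (i + 1)]
      push_cast
      ring
    have lower_term : (C (q * (qNumber q m - qNumber q i)) * distancePoly q m i).degree <
        ↑(i + 2) := by
      rw [← Polynomial.smul_eq_C_mul]
      refine (Polynomial.degree_smul_le _ _).trans_lt ?_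
      rw [degree_distancePoly hq m i]
      exact Nat.cast_lt.mpr (by omega)
    rw [distancePoly, Polynomial.degree_C_mul (inv_ne_zero (qNumber_succ_pos hq _).ne'),
      Polynomial.degree_sub_eq_left_of_degree_lt (main_term ▸ lower_term), main_term]

lemma eval_distancePoly_collinearityEigenvalue (hq : 1 < q) (a b : ℕ) :
    ∀ i, (distancePoly q (a + b) i).eval (collinearityEigenvalue q a b) = (genFun q a b).coeff i
  | 0 => by simp [distancePoly, coeff_genFun_zero]
  | 1 => by simp [distancePoly, coeff_genFun_one a b hq.ne']
  | i + 2 => by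
    simp only [distancePoly, Polynomial.eval_mul, Polynomial.eval_sub, Polynomial.eval_X,
      Polynomial.eval_C, eval_distancePoly_collinearityEigenvalue hq a b i,
      eval_distancePoly_collinearityEigenvalue hq a b (i + 1)]
    rw [← qNumber_mul_coeff_genFun a b hq.ne',
      inv_mul_cancel_left₀ (qNumber_succ_pos (zero_lt_one.trans hq) _).ne']

lemma natDegree_genFun_le (a b : ℕ) : (genFun q a b).natDegree ≤ a + b := by
  have factor (c : ℝ) : (1 + C c * X).natDegree ≤ 1 := by compute_degree
  have prod (k : ℕ) (u : ℕ → ℝ) : (∏ l ∈ range k, (1 + C (u l) * X)).natDegree ≤ k := by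
    simpa using (Polynomial.natDegree_prod_le _ _).trans (sum_le_card_nsmul (range k) _ 1
      fun l _ ↦ factor (u l))
  exact Polynomial.natDegree_mul_le.trans (add_le_add (prod _ _) (prod _ _))

lemma collinearityEigenvalue_injOn (hq : 0 < q) (m : ℕ) :
    Set.InjOn (fun a ↦ collinearityEigenvalue q a (m - a)) (range (m + 1)) := by
  refine StrictMonoOn.injOn fun a ha a' ha' h ↦ ?_
  simp only [coe_range, Set.mem_Iio] at ha ha'
  exact sub_lt_sub (mul_lt_mul_of_pos_left (strictMono_qNumber hq h) hq)
    (strictMono_qNumber hq (by omega))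

lemma exists_eq_collinearityEigenvalue (hq : 1 < q) {m : ℕ} {θ : ℝ}
    (h : (distancePoly q m (m + 1)).eval θ = 0) :
    ∃ a b, a + b = m ∧ θ = collinearityEigenvalue q a b := by
  have hq0 := zero_lt_one.trans hq
  have deg := degree_distancePoly hq0 m (m + 1)
  have ne_zero : distancePoly q m (m + 1) ≠ 0 := Polynomial.ne_zero_of_coe_le_degree deg.ge
  set E := (range (m + 1)).image fun a ↦ collinearityEigenvalue q a (m - a)
  have subset_roots : E ⊆ (distancePoly q m (m + 1)).roots.toFinset := by
    intro x hx
    obtain ⟨a, ha, rfl⟩ := mem_image.mp hx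
    have hab : a + (m - a) = m := Nat.add_sub_cancel' (Nat.le_of_lt_succ (mem_range.mp ha))
    have eval := eval_distancePoly_collinearityEigenvalue hq a (m - a) (m + 1)
    rw [hab, Polynomial.coeff_eq_zero_of_natDegree_lt
      ((natDegree_genFun_le a (m - a)).trans_lt (by omega))] at eval
    simpa [ne_zero] using eval
  have card_roots : #(distancePoly q m (m + 1)).roots.toFinset ≤ #E := by
    rw [card_image_of_injOn (collinearityEigenvalue_injOn hq0 m), card_range]
    exact (Multiset.toFinset_card_le _).trans
      ((Polynomial.card_roots' _).trans (Polynomial.natDegree_eq_of_degree_eq_some deg).le)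
  have hθ : θ ∈ E := by
    rw [eq_of_subset_of_card_le subset_roots card_roots]
    simpa [ne_zero] using h
  obtain ⟨a, ha, rfl⟩ := mem_image.mp hθ
  exact ⟨a, m - a, Nat.add_sub_cancel' (Nat.le_of_lt_succ (mem_range.mp ha)), rfl⟩

end DistancePoly

section Spectrum

variable {ι : Type*} [Fintype ι]

lemma eigSet_eq_spectrum [DecidableEq ι] (A : Matrix ι ι ℝ) : eigSet A = spectrum ℝ A := by
  ext μ
  rw [← Matrix.spectrum_toLin', ← Module.End.hasEigenvalue_iff_mem_spectrum]
  constructor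
  · rintro ⟨v, hv, h⟩
    exact Module.End.hasEigenvalue_of_hasEigenvector (x := v)
      ⟨Module.End.mem_eigenspace_iff.mpr h, hv⟩
  · intro h
    obtain ⟨v, hv⟩ := h.exists_hasEigenvector
    exact ⟨v, hv.2, hv.apply_eq_smul⟩

lemma eigSet_reindex {κ : Type*} [Fintype κ] (e : ι ≃ κ) (A : Matrix ι ι ℝ) :
    eigSet (A.reindex e e) = eigSet A := by
  rw [eigSet_eq_spectrum, eigSet_eq_spectrum,
    ← Matrix.coe_reindexAlgEquiv ℝ, AlgEquiv.spectrum_eq]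

lemma eigSet_aeval [DecidableEq ι] {A : Matrix ι ι ℝ} (hA : IsSelfAdjoint A) (p : ℝ[X]) :
    eigSet (Polynomial.aeval A p) = p.eval '' eigSet A := by
  rw [eigSet_eq_spectrum, eigSet_eq_spectrum, ← cfc_polynomial p A hA, cfc_map_spectrum _ A hA]

lemma maxEig_eq {A : Matrix ι ι ℝ} {κ : ℝ} (hκ : κ ∈ eigSet A) (h : ∀ μ ∈ eigSet A, |μ| ≤ κ) :
    maxEig A = κ :=
  IsGreatest.csSup_eq ⟨hκ, fun μ hμ ↦ (le_abs_self μ).trans (h μ hμ)⟩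

lemma specParam_eq {A : Matrix ι ι ℝ} {κ ν : ℝ} (hκ : κ ∈ eigSet A) (hν : ν ∈ eigSet A)
    (hlt : |ν| < κ) (h : ∀ μ ∈ eigSet A, μ = κ ∨ |μ| ≤ |ν|) : specParam A = |ν| := by
  have abs_κ : |κ| = κ := abs_of_pos ((abs_nonneg ν).trans_lt hlt)
  have largest : sSup (abs '' eigSet A) = κ := by
    refine IsGreatest.csSup_eq ⟨⟨κ, hκ, abs_κ⟩, ?_⟩
    rintro _ ⟨μ, hμ, rfl⟩
    rcases h μ hμ with rfl | hle
    · exact abs_κ.le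
    · exact hle.trans hlt.le
  rw [specParam, largest]
  refine IsGreatest.csSup_eq ⟨⟨⟨ν, hν, rfl⟩, hlt.ne⟩, ?_⟩
  rintro _ ⟨⟨μ, hμ, rfl⟩, hne⟩
  refine (h μ hμ).resolve_left ?_
  rintro rfl
  exact hne abs_κ

end Spectrum

open Module (finrank)

section Counting

variable {K V : Type*} [Field K] [AddCommGroup V] [Module K V]

lemma finrank_sup_span_singleton {S : Submodule K V} [FiniteDimensional K S] {v : V} (hv : v ∉ S) :
    finrank K ↥(S ⊔ K ∙ v) = finrank K S + 1 := by
  have disj : S ⊓ K ∙ v = ⊥ := (Submodule.disjoint_span_singleton'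
    (ne_of_mem_of_not_mem S.zero_mem hv).symm).mpr hv |>.eq_bot
  have h := Submodule.finrank_sup_add_finrank_inf_eq S (K ∙ v)
  rwa [disj, finrank_bot, finrank_span_singleton (ne_of_mem_of_not_mem S.zero_mem hv).symm] at h

lemma sup_span_singleton_eq {S Z : Submodule K V} [FiniteDimensional K Z] (hSZ : S ≤ Z)
    (hZ : finrank K Z = finrank K S + 1) {v : V} (hvZ : v ∈ Z) (hvS : v ∉ S) :
    S ⊔ K ∙ v = Z := by
  have : FiniteDimensional K S := Submodule.finiteDimensional_of_le hSZ
  exact Submodule.eq_of_le_of_finrank_le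
    (sup_le hSZ (by simpa [Submodule.span_singleton_le_iff_mem] using hvZ))
    (by rw [finrank_sup_span_singleton hvS, hZ])

lemma card_submodule_sdiff [Fintype V] [FiniteDimensional K V] {S T : Submodule K V} (hST : S ≤ T) :
    (#{v | v ∈ T ∧ v ∉ S} : ℤ) = Nat.card K ^ finrank K T - Nat.card K ^ finrank K S := by
  have card_mem (U : Submodule K V) : #{v | v ∈ U} = Nat.card K ^ finrank K U := by
    rw [← Module.natCard_eq_pow_finrank, Nat.card_eq_fintype_card, Fintype.card_subtype]
  have sdiff : ({v | v ∈ T ∧ v ∉ S} : Finset V) =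
      ({v | v ∈ T} : Finset V) \ ({v | v ∈ S} : Finset V) := by
    ext; simp
  rw [sdiff, cast_card_sdiff fun v ↦ by simpa using @hST v, card_mem, card_mem]
  norm_cast

variable [Finite K] [FiniteDimensional K V] [Fintype (Submodule K V)]

lemma card_finrank_succ_between {S T : Submodule K V} (hST : S ≤ T) :
    #{Z : Submodule K V | S ≤ Z ∧ Z ≤ T ∧ finrank K Z = finrank K S + 1} =
      qNumber (Nat.card K) (finrank K T - finrank K S) := by
  have := Module.finite_of_finite K (M := V)
  have := Fintype.ofFinite V
  set s := finrank K S with hs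
  have maps : Set.MapsTo (fun v ↦ S ⊔ K ∙ v) ({v | v ∈ T ∧ v ∉ S} : Finset V)
      ({Z | S ≤ Z ∧ Z ≤ T ∧ finrank K Z = s + 1} : Finset (Submodule K V)) := by
    intro v hv
    simp only [coe_filter, mem_univ, true_and, Set.mem_ofPred_eq] at hv ⊢
    exact ⟨le_sup_left, sup_le hST ((Submodule.span_singleton_le_iff_mem v T).mpr hv.1),
      finrank_sup_span_singleton hv.2⟩
  have fibre {Z : Submodule K V} (hSZ : S ≤ Z) (hZT : Z ≤ T) (hZ : finrank K Z = s + 1) :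
      ({v ∈ ({v | v ∈ T ∧ v ∉ S} : Finset V) | S ⊔ K ∙ v = Z} : Finset V) =
        ({v | v ∈ Z ∧ v ∉ S} : Finset V) := by
    ext v
    simp only [mem_filter, mem_univ, true_and]
    constructor
    · rintro ⟨⟨-, hvS⟩, rfl⟩
      exact ⟨Submodule.mem_sup_right (Submodule.mem_span_singleton_self v), hvS⟩
    · rintro ⟨hvZ, hvS⟩
      exact ⟨⟨hZT hvZ, hvS⟩, sup_span_singleton_eq hSZ hZ hvZ hvS⟩
  have count : (#{v | v ∈ T ∧ v ∉ S} : ℤ) =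
      #{Z : Submodule K V | S ≤ Z ∧ Z ≤ T ∧ finrank K Z = s + 1} *
        (Nat.card K ^ (s + 1) - Nat.card K ^ s) := by
    rw [card_eq_sum_card_fiberwise maps, Nat.cast_sum, ← nsmul_eq_mul]
    refine sum_eq_card_nsmul fun Z hZ ↦ ?_
    obtain ⟨hSZ, hZT, hZ⟩ := (mem_filter.mp hZ).2
    rw [fibre hSZ hZT hZ, card_submodule_sdiff hSZ, hZ]
  have hq : (1 : ℤ) < Nat.card K := mod_cast Finite.one_lt_card
  rw [card_submodule_sdiff hST, ← Nat.add_sub_cancel' (Submodule.finrank_mono hST), ← hs] at count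
  apply Nat.cast_injective (R := ℤ)
  rw [natCast_qNumber]
  refine mul_left_cancel₀ (mul_ne_zero (pow_ne_zero s (zero_lt_one.trans hq).ne')
    (sub_ne_zero.mpr hq.ne')) ?_
  linear_combination -count -
    Nat.card K ^ s * sub_one_mul_qNumber (Nat.card K : ℤ) (finrank K T - s)

end Counting

section Lagrangian

open LinearMap.BilinForm (orthogonal_le finrank_orthogonal orthogonal_orthogonal
  le_orthogonal_orthogonal)

variable {K V : Type*} [Field K] [AddCommGroup V] [Module K V] {B : LinearMap.BilinForm K V}
  {x y z w H S T : Submodule K V}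

/-- A subspace that is its own orthogonal complement. For a nondegenerate alternating form on a
`2n`-dimensional space these are the `n`-dimensional isotropic subspaces. -/
def IsLagrangian (B : LinearMap.BilinForm K V) (x : Submodule K V) : Prop := B.orthogonal x = x

lemma orthogonal_sup (B : LinearMap.BilinForm K V) (S T : Submodule K V) :
    B.orthogonal (S ⊔ T) = B.orthogonal S ⊓ B.orthogonal T := by
  refine le_antisymm (le_inf (orthogonal_le le_sup_left) (orthogonal_le le_sup_right)) ?_
  rintro v ⟨hS, hT⟩ u hu
  obtain ⟨s, hs, t, ht, rfl⟩ := Submodule.mem_sup.mp hu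
  change B (s + t) v = 0
  rw [map_add, LinearMap.add_apply, hS s hs, hT t ht, add_zero]

lemma le_orthogonal_sup_span_singleton (hB : B.IsAlt) (hH : H ≤ B.orthogonal H) {v : V}
    (hv : v ∈ B.orthogonal H) : H ⊔ K ∙ v ≤ B.orthogonal (H ⊔ K ∙ v) := by
  have span_le_iff : K ∙ v ≤ B.orthogonal H := (Submodule.span_singleton_le_iff_mem v _).mpr hv
  have self : K ∙ v ≤ B.orthogonal (K ∙ v) := by
    rw [Submodule.span_singleton_le_iff_mem]
    rintro u hu
    obtain ⟨c, rfl⟩ := Submodule.mem_span_singleton.mp hu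
    simp [hB v]
  rw [orthogonal_sup]
  exact sup_le
    (le_inf hH ((le_orthogonal_orthogonal hB.isRefl).trans (orthogonal_le span_le_iff)))
    (le_inf span_le_iff self)

lemma exists_isLagrangian_ge [FiniteDimensional K V] (hB : B.IsAlt) (hw : w ≤ B.orthogonal w) :
    ∃ x, IsLagrangian B x ∧ w ≤ x := by
  obtain ⟨x, hwx, hx⟩ := exists_maximal_ge_of_wellFoundedGT (fun S ↦ S ≤ B.orthogonal S) w hw
  refine ⟨x, le_antisymm (fun v hv ↦ ?_) hx.prop, hwx⟩
  exact hx.le_of_ge (le_orthogonal_sup_span_singleton hB hx.prop hv) le_sup_left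
    (Submodule.mem_sup_right (Submodule.mem_span_singleton_self v))

lemma IsLagrangian.le_orthogonal (hx : IsLagrangian B x) (hHx : H ≤ x) : x ≤ B.orthogonal H :=
  hx.ge.trans (orthogonal_le hHx)

lemma IsLagrangian.isotropic (hx : IsLagrangian B x) (hHx : H ≤ x) : H ≤ B.orthogonal H :=
  hHx.trans (hx.le_orthogonal hHx)

lemma IsLagrangian.eq_of_le (hx : IsLagrangian B x) (hy : IsLagrangian B y) (h : x ≤ y) : x = y :=
  h.antisymm (hy.ge.trans ((orthogonal_le h).trans hx.le))

lemma orthogonal_sup_eq_inf (hy : IsLagrangian B y) :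
    B.orthogonal (y ⊔ H) = y ⊓ B.orthogonal H := by
  rw [orthogonal_sup, hy]

variable [FiniteDimensional K V]

lemma finrank_add_finrank_orthogonal (hB : B.Nondegenerate) (S : Submodule K V) :
    finrank K S + finrank K (B.orthogonal S) = finrank K V := by
  rw [finrank_orthogonal hB, Nat.add_sub_cancel' (Submodule.finrank_le S)]

lemma IsLagrangian.two_mul_finrank (hB : B.Nondegenerate) (hx : IsLagrangian B x) :
    2 * finrank K x = finrank K V := by
  have h := finrank_add_finrank_orthogonal hB x
  rwa [hx, ← two_mul] at h

lemma isLagrangian_iff (hB : B.Nondegenerate) :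
    IsLagrangian B x ↔ x ≤ B.orthogonal x ∧ 2 * finrank K x = finrank K V := by
  refine ⟨fun hx ↦ ⟨hx.ge, hx.two_mul_finrank hB⟩, fun ⟨hx, _⟩ ↦ ?_⟩
  have h := finrank_add_finrank_orthogonal hB x
  exact (Submodule.eq_of_le_of_finrank_le hx (by omega)).symm

lemma isLagrangian_projection (hB : B.Nondegenerate) (hrefl : B.IsRefl) (hy : IsLagrangian B y)
    (hH : H ≤ B.orthogonal H) : IsLagrangian B (H ⊔ y ⊓ B.orthogonal H) := by
  rw [IsLagrangian, orthogonal_sup, ← orthogonal_sup_eq_inf hy, orthogonal_orthogonal hB hrefl,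
    orthogonal_sup_eq_inf hy, inf_comm, sup_comm, sup_inf_assoc_of_le y hH]

lemma inf_projection (hB : B.Nondegenerate) (hrefl : B.IsRefl) (hy : IsLagrangian B y)
    (hH : H ≤ B.orthogonal H) : y ⊓ (H ⊔ y ⊓ B.orthogonal H) = y ⊓ B.orthogonal H :=
  le_antisymm
    (inf_le_inf_left y ((isLagrangian_projection hB hrefl hy hH).le_orthogonal le_sup_left))
    (le_inf inf_le_left le_sup_right)

lemma finrank_inf_orthogonal (hB : B.Nondegenerate) (hy : IsLagrangian B y)
    (dim : 2 * (finrank K H + 1) = finrank K V) :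
    finrank K ↥(y ⊓ B.orthogonal H) = finrank K ↥(y ⊓ H) + 1 := by
  have h_orth := finrank_add_finrank_orthogonal hB (y ⊔ H)
  have h_sup := Submodule.finrank_sup_add_finrank_inf_eq y H
  have h_y := hy.two_mul_finrank hB
  rw [orthogonal_sup_eq_inf hy] at h_orth
  omega

lemma inf_eq_of_ne_projection (hB : B.Nondegenerate) (hrefl : B.IsRefl) (hy : IsLagrangian B y)
    (dim : 2 * (finrank K H + 1) = finrank K V) (hz : IsLagrangian B z) (hHz : H ≤ z)
    (hne : z ≠ H ⊔ y ⊓ B.orthogonal H) : y ⊓ z = y ⊓ H := by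
  have proj := isLagrangian_projection hB hrefl hy (hz.isotropic hHz)
  have inf_le_proj : y ⊓ z ≤ H ⊔ y ⊓ B.orthogonal H :=
    (inf_le_inf_left y (hz.le_orthogonal hHz)).trans le_sup_right
  refine le_antisymm (le_inf inf_le_left ?_) (inf_le_inf_left y hHz)
  by_contra! not_le
  have lt : H < z ⊓ (H ⊔ y ⊓ B.orthogonal H) :=
    (le_inf hHz le_sup_left).lt_of_not_ge fun h ↦
      not_le ((le_inf inf_le_right inf_le_proj).trans h)
  have z_dim := hz.two_mul_finrank hB
  have inf_eq : z ⊓ (H ⊔ y ⊓ B.orthogonal H) = z :=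
    Submodule.eq_of_le_of_finrank_le inf_le_left
      (by have := Submodule.finrank_lt_finrank_of_lt lt; omega)
  exact hne (hz.eq_of_le proj (inf_eq_left.mp inf_eq))

section Count

variable [Finite K] [Fintype (Submodule K V)]

lemma card_lagrangian_ge (hB : B.Nondegenerate) (halt : B.IsAlt) (hH : H ≤ B.orthogonal H)
    (dim : 2 * (finrank K H + 1) = finrank K V) :
    #{z | IsLagrangian B z ∧ H ≤ z} = Nat.card K + 1 := by
  have h_orth := finrank_add_finrank_orthogonal hB H
  have between : ({z | IsLagrangian B z ∧ H ≤ z} : Finset (Submodule K V)) =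
      ({Z | H ≤ Z ∧ Z ≤ B.orthogonal H ∧ finrank K Z = finrank K H + 1} :
        Finset (Submodule K V)) := by
    ext z
    simp only [mem_filter, mem_univ, true_and]
    constructor
    · rintro ⟨hz, hHz⟩
      have := hz.two_mul_finrank hB
      exact ⟨hHz, hz.le_orthogonal hHz, by omega⟩
    · rintro ⟨hHz, hzH, hz⟩
      obtain ⟨v, hvz, hvH⟩ := SetLike.exists_of_lt (hHz.lt_of_ne (by rintro rfl; omega))
      obtain rfl := sup_span_singleton_eq hHz hz hvz hvH
      exact ⟨(isLagrangian_iff hB).mpr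
        ⟨le_orthogonal_sup_span_singleton halt hH (hzH hvz), by omega⟩, hHz⟩
  rw [between, card_finrank_succ_between hH,
    show finrank K (B.orthogonal H) - finrank K H = 2 by omega]
  simp [qNumber, sum_range_succ, add_comm]

lemma card_hyperplanes_between (hB : B.Nondegenerate) (hrefl : B.IsRefl) (hST : S ≤ T) :
    #{H : Submodule K V | S ≤ H ∧ H ≤ T ∧ finrank K H + 1 = finrank K T} =
      qNumber (Nat.card K) (finrank K T - finrank K S) := by
  have dim := finrank_add_finrank_orthogonal hB
  have orth_orth := orthogonal_orthogonal hB hrefl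
  have dual := card_finrank_succ_between (orthogonal_le (B := B) hST)
  rw [show finrank K (B.orthogonal S) - finrank K (B.orthogonal T) = finrank K T - finrank K S by
    have := dim S; have := dim T; omega] at dual
  rw [← dual]
  refine card_nbij' B.orthogonal B.orthogonal ?_ ?_ (fun H _ ↦ orth_orth H) (fun Z _ ↦ orth_orth Z)
  · intro H hH
    simp only [coe_filter, mem_univ, true_and, Set.mem_ofPred_eq] at hH ⊢
    exact ⟨orthogonal_le hH.2.1, orthogonal_le hH.1, by have := dim H; have := dim T; omega⟩
  · intro Z hZ
    simp only [coe_filter, mem_univ, true_and, Set.mem_ofPred_eq] at hZ ⊢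
    refine ⟨?_, ?_, by have := dim Z; have := dim T; have := Submodule.finrank_le T; omega⟩
    · simpa only [orth_orth] using orthogonal_le (B := B) hZ.2.1
    · simpa only [orth_orth] using orthogonal_le (B := B) hZ.1

end Count

end Lagrangian

section Distance

variable {K V : Type*} [Field K] [AddCommGroup V] [Module K V]

/-- The distance in the dual polar graph, as the codimension of the intersection in `x`. On
subspaces of equal dimension it is symmetric. -/
noncomputable def polarDist (x y : Submodule K V) : ℕ := finrank K x - finrank K ↥(x ⊓ y)

lemma polarDist_self (x : Submodule K V) : polarDist x x = 0 := by
  rw [polarDist, inf_idem, Nat.sub_self]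

variable [FiniteDimensional K V] {B : LinearMap.BilinForm K V} {x y z w H : Submodule K V}

lemma finrank_inf_add_polarDist (x y : Submodule K V) :
    finrank K ↥(x ⊓ y) + polarDist x y = finrank K x :=
  Nat.add_sub_cancel' (Submodule.finrank_mono inf_le_left)

lemma polarDist_eq_zero_iff (hx : IsLagrangian B x) (hy : IsLagrangian B y) :
    polarDist x y = 0 ↔ x = y := by
  refine ⟨fun h ↦ hx.eq_of_le hy (inf_eq_left.mp ?_), fun h ↦ h ▸ polarDist_self x⟩
  exact Submodule.eq_of_le_of_finrank_le inf_le_left (Nat.sub_eq_zero_iff_le.mp h)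

lemma IsLagrangian.polarDist_comm (hB : B.Nondegenerate) (hx : IsLagrangian B x)
    (hy : IsLagrangian B y) : polarDist x y = polarDist y x := by
  have := hx.two_mul_finrank hB
  have := hy.two_mul_finrank hB
  rw [polarDist, polarDist, inf_comm]
  omega

lemma finrank_inf_add_one_of_not_le (hHx : H ≤ x) (hH : finrank K H + 1 = finrank K x)
    {S : Submodule K V} (hSx : S ≤ x) (hSH : ¬ S ≤ H) :
    finrank K ↥(S ⊓ H) + 1 = finrank K S := by
  have dim := Submodule.finrank_sup_add_finrank_inf_eq S H
  have lt := Submodule.finrank_lt_finrank_of_lt (right_lt_sup.mpr hSH)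
  have le := Submodule.finrank_mono (sup_le hSx hHx)
  omega

variable [Fintype (Submodule K V)]

lemma sum_adjacent_eq_sum_hyperplanes (hx : IsLagrangian B x) (hwx : w ≤ x)
    (g : Submodule K V → ℝ) :
    ∑ z with (IsLagrangian B z ∧ w ≤ z) ∧ polarDist x z = 1, g z =
      ∑ H with w ≤ H ∧ H ≤ x ∧ finrank K H + 1 = finrank K x,
        (∑ z with IsLagrangian B z ∧ H ≤ z, g z - g x) := by
  rw [← sum_fiberwise_of_maps_to (g := (x ⊓ ·)) (t := ({H | w ≤ H ∧ H ≤ x ∧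
    finrank K H + 1 = finrank K x} : Finset (Submodule K V)))]
  · refine sum_congr rfl fun H hH ↦ ?_
    obtain ⟨hwH, hHx, hH⟩ := (mem_filter.mp hH).2
    rw [← sum_erase_eq_sub (mem_filter.mpr ⟨mem_univ x, hx, hHx⟩)]
    refine sum_congr ?_ fun _ _ ↦ rfl
    ext z
    have dist := finrank_inf_add_polarDist x z
    simp only [mem_filter, mem_univ, true_and, mem_erase]
    constructor
    · rintro ⟨⟨⟨hz, -⟩, h1⟩, rfl⟩
      refine ⟨?_, hz, inf_le_right⟩
      rintro rfl
      simp [polarDist_self] at h1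
    · rintro ⟨hzx, hz, hHz⟩
      have inf_lt : x ⊓ z < x := inf_le_left.lt_of_not_ge fun h ↦
        hzx (hx.eq_of_le hz (h.trans inf_le_right)).symm
      have := Submodule.finrank_lt_finrank_of_lt inf_lt
      obtain rfl : H = x ⊓ z :=
        Submodule.eq_of_le_of_finrank_le (le_inf hHx hHz) (by omega)
      exact ⟨⟨⟨hz, hwH.trans hHz⟩, by omega⟩, rfl⟩
  · intro z hz
    obtain ⟨⟨-, hwz⟩, h1⟩ := (mem_filter.mp hz).2
    have := finrank_inf_add_polarDist x z
    exact mem_filter.mpr ⟨mem_univ _, le_inf hwx hwz, inf_le_left, by omega⟩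

variable [Finite K]

-- `H ⊔ y ⊓ Hᗮ` is the point nearest to `y` on the line of Lagrangians through `H`.
lemma sum_polarDist_of_line (hB : B.Nondegenerate) (halt : B.IsAlt) (hH : H ≤ B.orthogonal H)
    (dim : 2 * (finrank K H + 1) = finrank K V) (hy : IsLagrangian B y) {i : ℕ}
    (hi : finrank K ↥(y ⊓ H) + (i + 1) = finrank K y) (α : ℕ → ℝ) :
    ∑ z with IsLagrangian B z ∧ H ≤ z, α (polarDist y z) = α i + Nat.card K * α (i + 1) := by
  set p := H ⊔ y ⊓ B.orthogonal H
  have hp : p ∈ ({z | IsLagrangian B z ∧ H ≤ z} : Finset (Submodule K V)) :=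
    mem_filter.mpr ⟨mem_univ p, isLagrangian_projection hB halt.isRefl hy hH, le_sup_left⟩
  have dist_p : polarDist y p = i := by
    rw [polarDist, inf_projection hB halt.isRefl hy hH, finrank_inf_orthogonal hB hy dim]
    omega
  have dist_ne : ∀ z ∈ ({z | IsLagrangian B z ∧ H ≤ z} : Finset (Submodule K V)).erase p,
      α (polarDist y z) = α (i + 1) := by
    intro z hz
    obtain ⟨hzp, hz⟩ := mem_erase.mp hz
    obtain ⟨hz, hHz⟩ := (mem_filter.mp hz).2
    rw [polarDist, inf_eq_of_ne_projection hB halt.isRefl hy dim hz hHz hzp]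
    congr 1
    omega
  rw [← add_sum_erase _ _ hp, dist_p, sum_eq_card_nsmul dist_ne, card_erase_of_mem hp,
    card_lagrangian_ge hB halt hH dim, Nat.add_sub_cancel, nsmul_eq_mul]

lemma sum_polarDist_of_hyperplane (hB : B.Nondegenerate) (halt : B.IsAlt)
    (hx : IsLagrangian B x) (hy : IsLagrangian B y) (hHx : H ≤ x)
    (hH : finrank K H + 1 = finrank K x) (α : ℕ → ℝ) :
    ∑ z with IsLagrangian B z ∧ H ≤ z, α (polarDist y z) - α (polarDist y x) =
      if y ⊓ x ≤ H then α (polarDist y x - 1) + (Nat.card K - 1) * α (polarDist y x)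
      else Nat.card K * α (polarDist y x + 1) := by
  have dim_x := hx.two_mul_finrank hB
  have dim_y := hy.two_mul_finrank hB
  have dim_inf := finrank_inf_add_polarDist y x
  have line_sum {k : ℕ} (hk : finrank K ↥(y ⊓ H) + (k + 1) = finrank K y) :=
    sum_polarDist_of_line hB halt (hx.isotropic hHx) (by omega) hy hk α
  split_ifs with hle
  · have inf_eq : y ⊓ H = y ⊓ x :=
      le_antisymm (inf_le_inf_left y hHx) (le_inf inf_le_left hle)
    have := Submodule.finrank_mono hle
    obtain ⟨k, hk⟩ : ∃ k, polarDist y x = k + 1 := Nat.exists_eq_succ_of_ne_zero (by omega)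
    rw [line_sum (k := k) (by rw [inf_eq]; omega), hk, Nat.add_sub_cancel]
    ring
  · have dim_yH := finrank_inf_add_one_of_not_le hHx hH inf_le_right hle
    rw [inf_assoc, inf_eq_right.mpr hHx] at dim_yH
    rw [line_sum (k := polarDist y x) (by omega)]
    ring

lemma card_hyperplanes_ge_inf (hB : B.Nondegenerate) (halt : B.IsAlt) (hx : IsLagrangian B x)
    (hy : IsLagrangian B y) (hwx : w ≤ x) (hwy : w ≤ y) :
    #{H ∈ ({H | w ≤ H ∧ H ≤ x ∧ finrank K H + 1 = finrank K x} : Finset (Submodule K V)) |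
      y ⊓ x ≤ H} = qNumber (Nat.card K) (polarDist y x) := by
  have dim_x := hx.two_mul_finrank hB
  have dim_y := hy.two_mul_finrank hB
  have codim : polarDist y x = finrank K x - finrank K ↥(y ⊓ x) := by rw [polarDist]; omega
  rw [filter_filter, codim, ← card_hyperplanes_between hB halt.isRefl inf_le_right]
  congr 1
  ext H
  simp only [mem_filter, mem_univ, true_and]
  exact ⟨fun h ↦ ⟨h.2, h.1.2⟩, fun h ↦ ⟨⟨(le_inf hwy hwx).trans h.1, h.2⟩, h.1⟩⟩

lemma sum_polarDist_adjacent (hB : B.Nondegenerate) (halt : B.IsAlt) {m : ℕ}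
    (hm : 2 * (finrank K w + m) = finrank K V) (hx : IsLagrangian B x) (hwx : w ≤ x)
    (hy : IsLagrangian B y) (hwy : w ≤ y) (α : ℕ → ℝ) :
    ∑ z with (IsLagrangian B z ∧ w ≤ z) ∧ polarDist x z = 1, α (polarDist y z) =
      qNumber (Nat.card K : ℝ) (polarDist y x) *
          (α (polarDist y x - 1) + (Nat.card K - 1) * α (polarDist y x)) +
        (qNumber (Nat.card K : ℝ) m - qNumber (Nat.card K : ℝ) (polarDist y x)) *
          (Nat.card K * α (polarDist y x + 1)) := by
  set hyperplanes : Finset (Submodule K V) :=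
    {H | w ≤ H ∧ H ≤ x ∧ finrank K H + 1 = finrank K x}
  have card_le : #{H ∈ hyperplanes | y ⊓ x ≤ H} = qNumber (Nat.card K) (polarDist y x) :=
    card_hyperplanes_ge_inf hB halt hx hy hwx hwy
  have card_all : #hyperplanes = qNumber (Nat.card K) m := by
    have := hx.two_mul_finrank hB
    rw [card_hyperplanes_between hB halt.isRefl hwx, show finrank K x - finrank K w = m by omega]
  have card_not_le : (#{H ∈ hyperplanes | ¬ y ⊓ x ≤ H} : ℝ) =
      qNumber (Nat.card K : ℝ) m - qNumber (Nat.card K : ℝ) (polarDist y x) := by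
    rw [eq_sub_iff_add_eq', ← natCast_qNumber, ← natCast_qNumber, ← card_le, ← card_all]
    exact_mod_cast card_filter_add_card_filter_not (s := hyperplanes) (y ⊓ x ≤ ·)
  rw [sum_adjacent_eq_sum_hyperplanes hx hwx, sum_congr rfl fun H hH ↦
    have hH := (mem_filter.mp hH).2
    sum_polarDist_of_hyperplane hB halt hx hy hH.2.1 hH.2.2 α]
  rw [sum_ite, sum_const, sum_const, nsmul_eq_mul, nsmul_eq_mul, card_le, card_not_le,
    natCast_qNumber]

end Distance

section DistanceMatrix

variable {K V : Type*} [Field K] [AddCommGroup V] [Module K V]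

/-- The vertices of the graph `G_w`: the Lagrangian subspaces containing `w`. -/
abbrev LagrangianGE (B : LinearMap.BilinForm K V) (w : Submodule K V) :=
  {x : Submodule K V // IsLagrangian B x ∧ w ≤ x}

variable [Fintype (Submodule K V)]

/-- The adjacency matrix of the distance-`j` graph on the Lagrangian subspaces containing `w`. -/
noncomputable def distMatrix (B : LinearMap.BilinForm K V) (w : Submodule K V) (j : ℕ) :
    Matrix (LagrangianGE B w) (LagrangianGE B w) ℝ :=
  adjMat fun x y ↦ polarDist x.1 y.1 = j

variable [FiniteDimensional K V] {B : LinearMap.BilinForm K V} {w : Submodule K V}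

lemma isSelfAdjoint_distMatrix (hB : B.Nondegenerate) (j : ℕ) :
    IsSelfAdjoint (distMatrix B w j) := by
  ext x y
  simp [Matrix.star_apply, distMatrix, adjMat, x.2.1.polarDist_comm hB y.2.1]

lemma distMatrix_zero : distMatrix B w 0 = 1 := by
  ext x y
  simp [distMatrix, adjMat, Matrix.one_apply, polarDist_eq_zero_iff x.2.1 y.2.1, Subtype.ext_iff]

lemma distMatrix_eq_zero (hB : B.Nondegenerate) {m j : ℕ}
    (hm : 2 * (finrank K w + m) = finrank K V) (hj : m < j) : distMatrix B w j = 0 := by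
  ext x y
  have := x.2.1.two_mul_finrank hB
  have := Submodule.finrank_mono (le_inf x.2.2 y.2.2)
  have := finrank_inf_add_polarDist x.1 y.1
  exact if_neg (by omega)

variable [Finite K] {m : ℕ}

lemma distMatrix_one_mulVec (hB : B.Nondegenerate) (halt : B.IsAlt)
    (hm : 2 * (finrank K w + m) = finrank K V) (α : ℕ → ℝ) (x y : LagrangianGE B w) :
    (distMatrix B w 1).mulVec (fun z ↦ α (polarDist y.1 z.1)) x =
      qNumber (Nat.card K : ℝ) (polarDist y.1 x.1) *
          (α (polarDist y.1 x.1 - 1) + (Nat.card K - 1) * α (polarDist y.1 x.1)) +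
        (qNumber (Nat.card K : ℝ) m - qNumber (Nat.card K : ℝ) (polarDist y.1 x.1)) *
          (Nat.card K * α (polarDist y.1 x.1 + 1)) := by
  rw [← sum_polarDist_adjacent hB halt hm x.2.1 x.2.2 y.2.1 y.2.2, ← filter_filter, sum_filter,
    sum_subtype (F := inferInstance) _ (p := fun z ↦ IsLagrangian B z ∧ w ≤ z) fun z ↦ by simp]
  simp only [Matrix.mulVec, dotProduct, distMatrix, adjMat, ite_mul, one_mul, zero_mul]

lemma distMatrix_one_mul (hB : B.Nondegenerate) (halt : B.IsAlt)
    (hm : 2 * (finrank K w + m) = finrank K V) (i : ℕ) :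
    distMatrix B w 1 * distMatrix B w (i + 1) =
      qNumber (Nat.card K : ℝ) (i + 2) • distMatrix B w (i + 2) +
        ((Nat.card K : ℝ) ^ (i + 1) - 1) • distMatrix B w (i + 1) +
        (Nat.card K * (qNumber (Nat.card K : ℝ) m - qNumber (Nat.card K : ℝ) i)) •
          distMatrix B w i := by
  ext x y
  have entry (j : ℕ) (z : LagrangianGE B w) :
      distMatrix B w j z y = if polarDist y.1 z.1 = j then 1 else 0 := by
    simp only [distMatrix, adjMat, z.2.1.polarDist_comm hB y.2.1]
  have column : (distMatrix B w 1 * distMatrix B w (i + 1)) x y =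
      (distMatrix B w 1).mulVec (fun z ↦ if polarDist y.1 z.1 = i + 1 then 1 else 0) x := by
    simp only [Matrix.mul_apply, Matrix.mulVec, dotProduct, entry]
  rw [column, distMatrix_one_mulVec hB halt hm fun k ↦ if k = i + 1 then 1 else 0]
  simp only [Matrix.add_apply, Matrix.smul_apply, smul_eq_mul, entry,
    ← sub_one_mul_qNumber (Nat.card K : ℝ) (i + 1)]
  generalize polarDist y.1 x.1 = k
  rcases k with _ | k
  · rcases i with _ | i <;> simp [qNumber_zero, mul_comm]
  · by_cases h_far : k = i + 1
    · subst h_far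
      simp [show i + 1 + 1 ≠ i by omega]
    · by_cases h_same : k = i
      · simp [h_same, mul_comm]
      · by_cases h_near : k + 1 = i
        · subst h_near
          simp [show k ≠ k + 1 + 1 by omega, mul_comm]
        · simp [h_far, h_same, h_near]

lemma aeval_distancePoly (hB : B.Nondegenerate) (halt : B.IsAlt)
    (hm : 2 * (finrank K w + m) = finrank K V) :
    ∀ i, Polynomial.aeval (distMatrix B w 1) (distancePoly (Nat.card K) m i) = distMatrix B w i
  | 0 => by rw [distancePoly, map_one, distMatrix_zero]
  | 1 => by rw [distancePoly, Polynomial.aeval_X]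
  | i + 2 => by
    have q_pos : (0 : ℝ) < Nat.card K := mod_cast Finite.card_pos
    rw [distancePoly, ← Polynomial.smul_eq_C_mul, ← Polynomial.smul_eq_C_mul, map_smul, map_sub,
      map_smul, map_mul, map_sub, Polynomial.aeval_X, Polynomial.aeval_C,
      aeval_distancePoly hB halt hm i, aeval_distancePoly hB halt hm (i + 1), sub_mul,
      ← Algebra.smul_def, distMatrix_one_mul hB halt hm, add_sub_right_comm, add_sub_cancel_right,
      add_sub_cancel_right, inv_smul_smul₀ (qNumber_succ_pos q_pos _).ne']

lemma eigSet_distMatrix (hB : B.Nondegenerate) (halt : B.IsAlt)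
    (hm : 2 * (finrank K w + m) = finrank K V) (j : ℕ) :
    eigSet (distMatrix B w j) =
      (distancePoly (Nat.card K) m j).eval '' eigSet (distMatrix B w 1) := by
  rw [← aeval_distancePoly hB halt hm j, eigSet_aeval (isSelfAdjoint_distMatrix hB 1)]

lemma exists_eq_collinearityEigenvalue_of_mem_eigSet (hB : B.Nondegenerate) (halt : B.IsAlt)
    (hm : 2 * (finrank K w + m) = finrank K V) {θ : ℝ} (hθ : θ ∈ eigSet (distMatrix B w 1)) :
    ∃ a b, a + b = m ∧ θ = collinearityEigenvalue (Nat.card K : ℝ) a b := by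
  refine exists_eq_collinearityEigenvalue (mod_cast Finite.one_lt_card) ?_
  have mem : (distancePoly (Nat.card K) m (m + 1)).eval θ ∈ eigSet (distMatrix B w (m + 1)) :=
    eigSet_distMatrix hB halt hm (m + 1) ▸ Set.mem_image_of_mem _ hθ
  rw [distMatrix_eq_zero hB hm m.lt_succ_self] at mem
  obtain ⟨v, hv, h⟩ := mem
  exact (smul_eq_zero.mp (h.symm.trans (Matrix.zero_mulVec v))).resolve_right hv

lemma exists_eq_coeff_genFun_of_mem_eigSet (hB : B.Nondegenerate) (halt : B.IsAlt)
    (hm : 2 * (finrank K w + m) = finrank K V) {j : ℕ} {μ : ℝ}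
    (hμ : μ ∈ eigSet (distMatrix B w j)) :
    ∃ a b, a + b = m ∧ μ = (genFun (Nat.card K : ℝ) a b).coeff j := by
  rw [eigSet_distMatrix hB halt hm] at hμ
  obtain ⟨θ, hθ, rfl⟩ := hμ
  obtain ⟨a, b, rfl, rfl⟩ := exists_eq_collinearityEigenvalue_of_mem_eigSet hB halt hm hθ
  exact ⟨a, b, rfl, eval_distancePoly_collinearityEigenvalue (mod_cast Finite.one_lt_card) a b j⟩

lemma coeff_genFun_mem_eigSet (hB : B.Nondegenerate) (halt : B.IsAlt) {a b : ℕ}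
    (hab : 2 * (finrank K w + (a + b)) = finrank K V)
    (h : collinearityEigenvalue (Nat.card K : ℝ) a b ∈ eigSet (distMatrix B w 1)) (j : ℕ) :
    (genFun (Nat.card K : ℝ) a b).coeff j ∈ eigSet (distMatrix B w j) := by
  rw [eigSet_distMatrix hB halt hab,
    ← eval_distancePoly_collinearityEigenvalue (mod_cast Finite.one_lt_card)]
  exact Set.mem_image_of_mem _ h

lemma mem_eigSet_distMatrix_one (hB : B.Nondegenerate) (halt : B.IsAlt)
    (hw : w ≤ B.orthogonal w) (hm : 2 * (finrank K w + m) = finrank K V) {θ : ℝ} {α : ℕ → ℝ}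
    (hα : α 0 ≠ 0)
    (h : ∀ i, qNumber (Nat.card K : ℝ) i * (α (i - 1) + (Nat.card K - 1) * α i) +
      (qNumber (Nat.card K : ℝ) m - qNumber (Nat.card K : ℝ) i) * (Nat.card K * α (i + 1)) =
        θ * α i) :
    θ ∈ eigSet (distMatrix B w 1) := by
  obtain ⟨y, hy⟩ := exists_isLagrangian_ge halt hw
  refine ⟨fun z ↦ α (polarDist y z.1), fun h0 ↦ hα ?_, ?_⟩
  · simpa only [polarDist_self, Pi.zero_apply] using congr_fun h0 ⟨y, hy⟩
  · ext x
    exact (distMatrix_one_mulVec hB halt hm α x ⟨y, hy⟩).trans (h _)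

lemma collinearityEigenvalue_right_zero_mem_eigSet (hB : B.Nondegenerate) (halt : B.IsAlt)
    (hw : w ≤ B.orthogonal w) (hm : 2 * (finrank K w + m) = finrank K V) :
    collinearityEigenvalue (Nat.card K : ℝ) m 0 ∈ eigSet (distMatrix B w 1) := by
  refine mem_eigSet_distMatrix_one hB halt hw hm (α := 1) one_ne_zero fun i ↦ ?_
  simp only [Pi.one_apply, collinearityEigenvalue, qNumber_zero]
  ring

lemma collinearityEigenvalue_left_zero_mem_eigSet (hB : B.Nondegenerate) (halt : B.IsAlt)
    (hw : w ≤ B.orthogonal w) (hm : 2 * (finrank K w + m) = finrank K V) :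
    collinearityEigenvalue (Nat.card K : ℝ) 0 m ∈ eigSet (distMatrix B w 1) := by
  have q_ne : (Nat.card K : ℝ) ≠ 0 := mod_cast Finite.card_pos.ne'
  refine mem_eigSet_distMatrix_one hB halt hw hm (α := fun k ↦ (-(Nat.card K : ℝ))⁻¹ ^ k)
    (by simp) fun i ↦ ?_
  rcases i with _ | i
  · simp [collinearityEigenvalue, qNumber_zero, q_ne]
  · simp only [collinearityEigenvalue, qNumber_zero, Nat.add_sub_cancel, pow_succ, inv_neg]
    field_simp
    ring

lemma specParam_div_maxEig_distMatrix (hB : B.Nondegenerate) (halt : B.IsAlt)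
    (hw : w ≤ B.orthogonal w) (hm : 2 * (finrank K w + m) = finrank K V) {j : ℕ} (hj : 0 < j)
    (hjm : j ≤ m) :
    specParam (distMatrix B w j) / maxEig (distMatrix B w j) = ((Nat.card K : ℝ) ^ j)⁻¹ := by
  set q : ℝ := (Nat.card K : ℝ)
  have hq : 1 < q := Nat.one_lt_cast.mpr Finite.one_lt_card
  set G := (qBinomialPoly q m).coeff j
  have G_pos : 0 < G := coeff_prod_one_add_C_mul_X_pos hjm fun l ↦ pow_pos (by positivity) l
  have valency_mem : q ^ j * G ∈ eigSet (distMatrix B w j) := by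
    rw [← coeff_genFun_right_zero]
    exact coeff_genFun_mem_eigSet hB halt hm
      (collinearityEigenvalue_right_zero_mem_eigSet hB halt hw hm) j
  have second_mem : (-1) ^ j * G ∈ eigSet (distMatrix B w j) := by
    rw [← coeff_genFun_left_zero]
    exact coeff_genFun_mem_eigSet hB halt (by rwa [zero_add])
      (collinearityEigenvalue_left_zero_mem_eigSet hB halt hw hm) j
  have abs_second : |(-1) ^ j * G| = G := by
    rw [abs_mul, abs_pow, abs_neg, abs_one, one_pow, one_mul, abs_of_pos G_pos]
  have second_lt : |(-1) ^ j * G| < q ^ j * G := by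
    rw [abs_second]
    exact lt_mul_of_one_lt_left G_pos (one_lt_pow₀ hq hj.ne')
  have dichotomy : ∀ μ ∈ eigSet (distMatrix B w j), μ = q ^ j * G ∨ |μ| ≤ |(-1) ^ j * G| := by
    intro μ hμ
    obtain ⟨a, b, rfl, rfl⟩ := exists_eq_coeff_genFun_of_mem_eigSet hB halt hm hμ
    rcases b with _ | b
    · exact .inl (coeff_genFun_right_zero a j)
    · exact .inr ((abs_coeff_genFun_succ_le hq.le a b j).trans_eq abs_second.symm)
  have abs_le : ∀ μ ∈ eigSet (distMatrix B w j), |μ| ≤ q ^ j * G := by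
    intro μ hμ
    rcases dichotomy μ hμ with rfl | hle
    · rw [abs_of_pos (by positivity)]
    · exact hle.trans second_lt.le
  rw [specParam_eq valency_mem second_mem second_lt dichotomy, maxEig_eq valency_mem abs_le,
    abs_second, div_mul_cancel_right₀ G_pos.ne']

end DistanceMatrix

section Symplectic

/-- The symplectic product `symp` as a bilinear form. -/
def sympForm (n : ℕ) : LinearMap.BilinForm F2 (PV n) :=
  LinearMap.mk₂ F2 symp
    (fun a a' b ↦ by
      simp only [symp, Prod.fst_add, Prod.snd_add, Pi.add_apply, add_mul, sum_add_distrib]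
      ring)
    (fun c a b ↦ by
      simp only [symp, Prod.smul_fst, Prod.smul_snd, Pi.smul_apply, smul_eq_mul, mul_add,
        mul_sum, mul_assoc])
    (fun a b b' ↦ by
      simp only [symp, Prod.fst_add, Prod.snd_add, Pi.add_apply, mul_add, sum_add_distrib]
      ring)
    (fun c a b ↦ by
      simp only [symp, Prod.smul_fst, Prod.smul_snd, Pi.smul_apply, smul_eq_mul, mul_add,
        mul_sum, mul_left_comm])

variable {n : ℕ}

lemma isAlt_sympForm : (sympForm n).IsAlt := fun a ↦ by
  change symp a a = 0
  simpa only [symp, mul_comm] using CharTwo.add_self_eq_zero (∑ i, a.1 i * a.2 i)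

lemma nondegenerate_sympForm : (sympForm n).Nondegenerate := by
  refine isAlt_sympForm.isRefl.nondegenerate_iff_separatingLeft.mpr fun a h ↦ ?_
  ext i
  · simpa [sympForm, symp, Pi.single_apply] using h (0, Pi.single i 1)
  · simpa [sympForm, symp, Pi.single_apply] using h (Pi.single i 1, 0)

lemma isIsotropic_iff_le_orthogonal {S : Submodule F2 (PV n)} :
    IsIsotropic S ↔ S ≤ (sympForm n).orthogonal S :=
  ⟨fun h _ hy x hx ↦ h x hx _ hy, fun h x hx _ hy ↦ h hy x hx⟩

lemma finrank_PV : finrank F2 (PV n) = 2 * n := by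
  simp [two_mul]

lemma mem_Lset_iff_isLagrangian {x : Submodule F2 (PV n)} :
    x ∈ Lset n n ↔ IsLagrangian (sympForm n) x := by
  rw [isLagrangian_iff nondegenerate_sympForm, finrank_PV, ← isIsotropic_iff_le_orthogonal,
    Nat.mul_left_cancel_iff two_pos]
  exact Iff.rfl

end Symplectic

end DualPolar

open DualPolar

theorem spectral_ratio_G_w_general {K V : Type*} [Field K] [Finite K] [AddCommGroup V] [Module K V]
    [FiniteDimensional K V] [Fintype (Submodule K V)] {B : LinearMap.BilinForm K V}
    (hB : B.Nondegenerate) (halt : B.IsAlt) {n : ℕ} (hn : Module.finrank K V = 2 * n)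
    {w : Submodule K V} (hw : w ≤ B.orthogonal w) {d : ℕ} (hwd : Module.finrank K w ≤ d)
    (hdn : d < n) :
    let A := adjMat fun x y : LagrangianGE B w ↦ Module.finrank K ↥(x.1 ⊓ y.1) = d
    specParam A / maxEig A = ((Nat.card K : ℝ) ^ (n - d))⁻¹ := by
  intro A
  have eq_distMatrix : A = distMatrix B w (n - d) := by
    refine congr_arg adjMat (funext₂ fun x y ↦ propext ?_)
    have := x.2.1.two_mul_finrank hB
    have := finrank_inf_add_polarDist x.1 y.1
    omega
  rw [eq_distMatrix]
  exact specParam_div_maxEig_distMatrix hB halt hw (m := n - Module.finrank K w) (by omega)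
    (by omega) (by omega)

/-- For even `n ≥ 4` and `w ∈ L^n_1`, the spectral ratio of `G_w` (adjacency:
`dim(x∩y) = n/2`) equals `2^{−n/2}`. -/
theorem spectral_ratio_G_w :
    ∀ n : ℕ, Even n → 4 ≤ n → ∀ w ∈ Lset n 1,
      specParam (adjG n w (n / 2)) / maxEig (adjG n w (n / 2)) =
        ((2 : ℝ) ^ (n / 2))⁻¹ := by
  rintro n ⟨k, rfl⟩ hn w ⟨hw, hw1⟩
  let e : GVtx (k + k) w ≃ LagrangianGE (sympForm (k + k)) w :=
    Equiv.subtypeEquivRight fun x ↦ and_congr_left' mem_Lset_iff_isLagrangian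
  have ratio := spectral_ratio_G_w_general nondegenerate_sympForm isAlt_sympForm finrank_PV
    (isIsotropic_iff_le_orthogonal.mp hw) (d := (k + k) / 2) (by omega) (by omega)
  have same_spectrum := eigSet_reindex e (adjG (k + k) w ((k + k) / 2))
  rw [show k + k - (k + k) / 2 = (k + k) / 2 by omega, Nat.card_zmod, Nat.cast_ofNat] at ratio
  rw [specParam, maxEig, ← same_spectrum]
  exact ratio
end

section
/- For n ≥ 4, the spectral parameter λ of the bipartite containment graph B_{n,2} satisfies λ² ≤ 75 · 2^{Q(n−3)}, where Q(i) = 2(n−i−2) + i(n−i) + i(i−1)/2. -/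
open Finset

open scoped Classical

/-- Vertices of the bipartite graph `B_{n,2}`: `L^n_n ∪ L^n_2`. -/
abbrev BVtx (n : ℕ) := {S : Submodule F2 (PV n) // S ∈ Lset n n ∪ Lset n 2}

/-- Adjacency in `B_{n,2}`: `x ∈ L^n_n` is adjacent to `t ∈ L^n_2` iff `t ⊊ x`. -/
def BAdj {n : ℕ} (x y : BVtx n) : Prop :=
  (x.1 ∈ Lset n 2 ∧ y.1 ∈ Lset n n ∧ x.1 < y.1) ∨
  (y.1 ∈ Lset n 2 ∧ x.1 ∈ Lset n n ∧ y.1 < x.1)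

/-- The adjacency matrix of `B_{n,2}`. -/
noncomputable def adjB (n : ℕ) : Matrix (BVtx n) (BVtx n) ℝ := adjMat BAdj

/-- The exponent `Q(i) = 2(n−i−2) + i(n−i) + i(i−1)/2`. -/
def Qexp (n i : ℕ) : ℕ := 2 * (n - i - 2) + i * (n - i) + i * (i - 1) / 2

/-!
Let `f` be the restriction to the Lagrangian subspaces of an eigenvector with eigenvalue `μ`.
Walking from a Lagrangian subspace to a plane and back shows that `6μ² f(L)` is the sum of
`(x - 1)(x - 2) f(L')` over all `L'`, where `x = |L ∩ L'|`. For an isotropic subspace `T`, the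
first two moments of `|L ∩ L'|` over the `L ⊇ T` are multiples of `|L' ∩ T|` and `|L' ∩ T|²`, so
summing the relation over the `L ⊇ T` expresses `μ² ∑_{L ⊇ T} f(L)` through the sums
`∑_{L ⊇ S} f(L)` with `S ≤ T`. Choosing `T` of least dimension with `∑_{L ⊇ T} f(L) ≠ 0` leaves only
`S = T` and determines `μ²`. If `μ ≠ 0`, that dimension is `0`, `1` or `2`: dimension `0` gives the
trivial eigenvalue, and the other two are bounded by explicit products.
-/

section LagrangianCount

/-- The number `∏_{i=1}^m (q^i + 1)` of Lagrangian subspaces of a symplectic space of dimension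
`2m` over the field with `q` elements. -/
def lagrangianCount (q m : ℕ) : ℕ := ∏ i ∈ range m, (q ^ (i + 1) + 1)

lemma lagrangianCount_succ (q m : ℕ) :
    lagrangianCount q (m + 1) = lagrangianCount q m * (q ^ (m + 1) + 1) :=
  prod_range_succ _ _

lemma lagrangianCount_mul_le {q : ℕ} (hq : 2 ≤ q) (m : ℕ) :
    lagrangianCount q m * (q ^ m + 2) ≤ 3 * q ^ (m + 1).choose 2 * q ^ m := by
  induction m with
  | zero => simp [lagrangianCount]
  | succ m ih =>
    have hstep : (q ^ (m + 1) + 1) * (q ^ (m + 1) + 2) ≤ (q ^ m + 2) * (q ^ (m + 1) * q) := by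
      have hy : 1 ≤ q ^ m := Nat.one_le_pow _ _ (by omega)
      have hqy : 2 * q ^ m ≤ q * q ^ m := Nat.mul_le_mul_right _ hq
      have hqqy : 2 * (q * q ^ m) ≤ q * (q * q ^ m) := Nat.mul_le_mul_right _ hq
      rw [pow_succ']
      linarith
    calc lagrangianCount q (m + 1) * (q ^ (m + 1) + 2)
        = lagrangianCount q m * ((q ^ (m + 1) + 1) * (q ^ (m + 1) + 2)) := by
          rw [lagrangianCount_succ, mul_assoc]
      _ ≤ lagrangianCount q m * ((q ^ m + 2) * (q ^ (m + 1) * q)) := by gcongr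
      _ ≤ 3 * q ^ (m + 1).choose 2 * q ^ m * (q ^ (m + 1) * q) := by
          rw [← mul_assoc]; gcongr
      _ = 3 * q ^ (m + 2).choose 2 * q ^ (m + 1) := by
          rw [Nat.choose_succ_succ' (m + 1) 1, Nat.choose_one_right, pow_add]; ring

theorem lagrangianCount_le {q : ℕ} (hq : 2 ≤ q) (m : ℕ) :
    lagrangianCount q m ≤ 3 * q ^ (m + 1).choose 2 := by
  have hpos : 0 < q ^ m := pow_pos (by omega) m
  refine Nat.le_of_mul_le_mul_right (le_trans ?_ (lagrangianCount_mul_le hq m)) hpos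
  gcongr
  omega

end LagrangianCount

section SubspaceCount

variable {K V : Type*} [Field K] [Finite K] [AddCommGroup V] [Module K V]

lemma card_linearIndependent_mem [Fintype V] (W : Submodule K V) (k : ℕ) :
    #{s : Fin k → V | LinearIndependent K s ∧ ∀ i, s i ∈ W} =
      ∏ i : Fin k, (Nat.card K ^ Module.finrank K W - Nat.card K ^ (i : ℕ)) := by
  have hcard : #{s : Fin k → V | LinearIndependent K s ∧ ∀ i, s i ∈ W} =
      Nat.card {s : Fin k → W // LinearIndependent K s} := by
    rw [← Fintype.card_subtype, ← Nat.card_eq_fintype_card]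
    exact Nat.card_congr
      { toFun := fun s ↦ ⟨fun i ↦ ⟨s.1 i, s.2.2 i⟩, .of_comp W.subtype s.2.1⟩
        invFun := fun s ↦ ⟨fun i ↦ s.1 i, s.2.map' W.subtype W.ker_subtype, fun i ↦ (s.1 i).2⟩
        left_inv := fun _ ↦ rfl
        right_inv := fun _ ↦ rfl }
  rw [hcard]
  rcases le_or_gt k (Module.finrank K W) with hk | hk
  · have := Fintype.ofFinite K
    simpa only [Nat.card_eq_fintype_card] using card_linearIndependent (K := K) hk
  · rw [prod_eq_zero (mem_univ (⟨_, hk⟩ : Fin k)) (Nat.sub_self _), Nat.card_eq_zero]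
    refine .inl ⟨fun s ↦ hk.not_ge ?_⟩
    simpa using s.2.fintype_card_le_finrank

theorem card_finrank_eq_mul [Finite V] [Fintype (Submodule K V)] (W : Submodule K V) (k : ℕ) :
    #{U | U ≤ W ∧ Module.finrank K U = k} *
        ∏ i : Fin k, (Nat.card K ^ k - Nat.card K ^ (i : ℕ)) =
      ∏ i : Fin k, (Nat.card K ^ Module.finrank K W - Nat.card K ^ (i : ℕ)) := by
  have := Fintype.ofFinite V
  have hspan (s : Fin k → V) (hs : LinearIndependent K s) :
      Module.finrank K (Submodule.span K (Set.range s)) = k := by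
    rw [finrank_span_eq_card hs, Fintype.card_fin]
  have hfiber (U) (hU : U ∈ ({U | U ≤ W ∧ Module.finrank K U = k} : Finset (Submodule K V))) :
      #{s ∈ {s : Fin k → V | LinearIndependent K s ∧ ∀ i, s i ∈ W} |
          Submodule.span K (Set.range s) = U} =
        ∏ i : Fin k, (Nat.card K ^ k - Nat.card K ^ (i : ℕ)) := by
    obtain ⟨hUW, hUk⟩ := (mem_filter_univ U).mp hU
    have hframe := card_linearIndependent_mem U k
    rw [hUk] at hframe
    rw [← hframe, filter_filter]
    congr 1
    ext s
    rw [mem_filter_univ, mem_filter_univ, and_assoc, and_congr_right_iff]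
    refine fun hs ↦ ⟨?_, fun hsU ↦ ⟨fun i ↦ hUW (hsU i), ?_⟩⟩
    · rintro ⟨-, rfl⟩ i
      exact Submodule.subset_span (Set.mem_range_self i)
    · exact Submodule.eq_of_le_of_finrank_eq
        (Submodule.span_le.mpr (Set.range_subset_iff.mpr hsU)) ((hspan s hs).trans hUk.symm)
  rw [← card_linearIndependent_mem W k, ← smul_eq_mul, ← sum_const, ← sum_congr rfl hfiber]
  refine (card_eq_sum_card_fiberwise fun s hs ↦ ?_).symm
  obtain ⟨hs, hsW⟩ := (mem_filter_univ s).mp hs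
  exact mem_coe.mpr ((mem_filter_univ _).mpr
    ⟨Submodule.span_le.mpr (Set.range_subset_iff.mpr hsW), hspan s hs⟩)

end SubspaceCount

lemma sum_add_card_smul {α M : Type*} [AddCommMonoid M] {s t : Finset α} (hst : s ⊆ t)
    {F : α → M} {a b : M} (ha : ∀ x ∈ s, F x = a) (hb : ∀ x ∈ t, x ∉ s → F x = b) :
    ∑ x ∈ t, F x + #s • b = #s • a + #t • b := by
  have hsdiff : ∑ x ∈ t \ s, F x = #(t \ s) • b :=
    sum_eq_card_nsmul fun x hx ↦ hb x (mem_sdiff.mp hx).1 (mem_sdiff.mp hx).2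
  rw [← sum_sdiff hst, hsdiff, sum_eq_card_nsmul ha, ← card_sdiff_add_card_eq_card hst, add_smul]
  abel

section SymplecticSpace

variable {K V : Type*} [Field K] [AddCommGroup V] [Module K V]
  {B : LinearMap.BilinForm K V} {L T : Submodule K V} {u : V} {n k m : ℕ}

/-- A Lagrangian subspace: one that is its own orthogonal complement. -/
def IsLagrangian (B : LinearMap.BilinForm K V) (L : Submodule K V) : Prop :=
  B.orthogonal L = L

lemma orthogonal_sup (B : LinearMap.BilinForm K V) (S T : Submodule K V) :
    B.orthogonal (S ⊔ T) = B.orthogonal S ⊓ B.orthogonal T := by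
  refine le_antisymm (le_inf (B.orthogonal_le le_sup_left) (B.orthogonal_le le_sup_right)) ?_
  rintro x ⟨hS, hT⟩ y hy
  obtain ⟨s, hs, t, ht, rfl⟩ := Submodule.mem_sup.mp hy
  rw [map_add, LinearMap.add_apply, hS s hs, hT t ht, add_zero]

lemma mem_orthogonal_span_singleton {v : V} :
    v ∈ B.orthogonal (K ∙ u) ↔ B u v = 0 := by
  rw [B.orthogonal_span_singleton_eq_toLin_ker, LinearMap.mem_ker]; rfl

lemma span_singleton_eq_of_finrank_eq_one (hT : Module.finrank K T = 1) (hu : u ∈ T)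
    (hu0 : u ≠ 0) : K ∙ u = T := by
  have := Module.finite_of_finrank_eq_succ hT
  exact Submodule.eq_of_le_of_finrank_eq ((Submodule.span_singleton_le_iff_mem u T).mpr hu)
    ((finrank_span_singleton hu0).trans hT.symm)

lemma sup_span_singleton_le_orthogonal (hB : B.IsAlt) (hT : T ≤ B.orthogonal T)
    (hu : u ∈ B.orthogonal T) : T ⊔ K ∙ u ≤ B.orthogonal (T ⊔ K ∙ u) := by
  have hTu : T ≤ B.orthogonal (K ∙ u) := fun t ht ↦
    mem_orthogonal_span_singleton.mpr (hB.isRefl t u (hu t ht))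
  have huu : u ∈ B.orthogonal (K ∙ u) := mem_orthogonal_span_singleton.mpr (hB u)
  rw [orthogonal_sup]
  refine sup_le (le_inf hT hTu) ?_
  rw [Submodule.span_singleton_le_iff_mem]
  exact ⟨hu, huu⟩

lemma IsLagrangian.le_orthogonal (hL : IsLagrangian B L) (hTL : T ≤ L) :
    L ≤ B.orthogonal T :=
  hL.ge.trans (B.orthogonal_le hTL)

section FiniteDimensional

variable [FiniteDimensional K V]

lemma IsLagrangian.finrank_eq (hB : B.Nondegenerate) (hV : Module.finrank K V = 2 * n)
    (hL : IsLagrangian B L) : Module.finrank K L = n := by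
  have h := LinearMap.BilinForm.finrank_orthogonal hB L
  have hle := L.finrank_le
  rw [hL] at h
  omega

lemma isLagrangian_of_le_orthogonal (hB : B.Nondegenerate) (hV : Module.finrank K V = 2 * n)
    (hT : T ≤ B.orthogonal T) (hn : Module.finrank K T = n) : IsLagrangian B T := by
  refine (Submodule.eq_of_le_of_finrank_eq hT ?_).symm
  rw [LinearMap.BilinForm.finrank_orthogonal hB]
  omega

lemma IsLagrangian.finrank_inf_orthogonal (hB : B.Nondegenerate)
    (hV : Module.finrank K V = 2 * n) (hL : IsLagrangian B L) (hT : Module.finrank K T + k = n) :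
    Module.finrank K ↥(L ⊓ B.orthogonal T) = k + Module.finrank K ↥(L ⊓ T) := by
  have hperp : B.orthogonal (L ⊔ T) = L ⊓ B.orthogonal T := by rw [orthogonal_sup, hL]
  have hsup := LinearMap.BilinForm.finrank_orthogonal hB (L ⊔ T)
  have hmod := Submodule.finrank_sup_add_finrank_inf_eq L T
  have hLn := hL.finrank_eq hB hV
  rw [hperp] at hsup
  omega

lemma IsLagrangian.card_inf_orthogonal (hB : B.Nondegenerate)
    (hV : Module.finrank K V = 2 * n) (hL : IsLagrangian B L) (hT : Module.finrank K T + k = n) :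
    Nat.card ↥(L ⊓ B.orthogonal T) = Nat.card K ^ k * Nat.card ↥(L ⊓ T) := by
  rw [Module.natCard_eq_pow_finrank (K := K) (V := ↥(L ⊓ B.orthogonal T)),
    hL.finrank_inf_orthogonal hB hV hT, pow_add, ← Module.natCard_eq_pow_finrank]

lemma card_inf_sup_span_singleton (hu : u ∈ L) (huT : u ∉ T) :
    Nat.card ↥(L ⊓ (T ⊔ K ∙ u)) = Nat.card K * Nat.card ↥(L ⊓ T) := by
  have huL : K ∙ u ≤ L := (Submodule.span_singleton_le_iff_mem u L).mpr hu
  have hmod : L ⊓ (T ⊔ K ∙ u) = L ⊓ T ⊔ K ∙ u := inf_sup_assoc_of_le T huL |>.symm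
  have huLT : u ∉ L ⊓ T := fun h ↦ huT (Submodule.mem_inf.mp h).2
  rw [hmod, Module.natCard_eq_pow_finrank (K := K) (V := ↥(L ⊓ T ⊔ K ∙ u)),
    Submodule.finrank_sup_span_singleton huLT, pow_succ', ← Module.natCard_eq_pow_finrank]

end FiniteDimensional

section Counting

lemma card_filter_mem_submodule [Fintype V] (W : Submodule K V) :
    #{u | u ∈ W} = Nat.card W := by
  rw [Nat.card_eq_fintype_card, Fintype.card_subtype]

lemma sum_mem_submodule [Fintype V] {U W : Submodule K V} (hUW : U ≤ W) {F : V → ℝ} {a b : ℝ}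
    (ha : ∀ u ∈ U, F u = a) (hb : ∀ u ∈ W, u ∉ U → F u = b) :
    ∑ u with u ∈ W, F u = Nat.card U * a + (Nat.card W - Nat.card U) * b := by
  have h := sum_add_card_smul (s := {u | u ∈ U}) (t := {u | u ∈ W})
    (monotone_filter_right _ fun u _ hu ↦ hUW hu) (F := F) (a := a) (b := b)
    (by simpa only [mem_filter_univ] using ha) (by simpa only [mem_filter_univ] using hb)
  simp only [card_filter_mem_submodule, nsmul_eq_mul] at h
  linarith

variable [Fintype (Submodule K V)]

/-- The Lagrangian subspaces containing `T`. -/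
noncomputable def lagrangiansOver (B : LinearMap.BilinForm K V) (T : Submodule K V) :
    Finset (Submodule K V) := {L | IsLagrangian B L ∧ T ≤ L}

lemma mem_lagrangiansOver : L ∈ lagrangiansOver B T ↔ IsLagrangian B L ∧ T ≤ L :=
  mem_filter_univ L

lemma lagrangiansOver_sup_span_singleton_of_mem (hu : u ∈ T) :
    lagrangiansOver B (T ⊔ K ∙ u) = lagrangiansOver B T := by
  rw [sup_eq_left.mpr ((Submodule.span_singleton_le_iff_mem u T).mpr hu)]

lemma lagrangiansOver_sup_span_singleton_of_notMem (hu : u ∉ B.orthogonal T) :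
    lagrangiansOver B (T ⊔ K ∙ u) = ∅ := by
  refine eq_empty_of_forall_notMem fun L hL ↦ hu ?_
  obtain ⟨hL, hTu⟩ := mem_lagrangiansOver.mp hL
  obtain ⟨hTL, huL⟩ := sup_le_iff.mp hTu
  exact hL.le_orthogonal hTL ((Submodule.span_singleton_le_iff_mem u L).mp huL)

lemma lagrangiansOver_eq_singleton [FiniteDimensional K V] (hB : B.Nondegenerate)
    (hV : Module.finrank K V = 2 * n) (hT : T ≤ B.orthogonal T) (hn : Module.finrank K T = n) :
    lagrangiansOver B T = {T} := by
  ext L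
  rw [mem_lagrangiansOver, mem_singleton]
  constructor
  · rintro ⟨hL, hTL⟩
    exact (Submodule.eq_of_le_of_finrank_eq hTL (hn.trans (hL.finrank_eq hB hV).symm)).symm
  · rintro rfl
    exact ⟨isLagrangian_of_le_orthogonal hB hV hT hn, le_rfl⟩

section DoubleCounting

variable {M : Type*} [AddCommMonoid M] {F : Submodule K V → M}

lemma sum_card_inf_smul [Fintype V] (F : Submodule K V → M) (W T : Submodule K V) :
    ∑ L ∈ lagrangiansOver B T, Nat.card ↥(W ⊓ L) • F L =
      ∑ u with u ∈ W, ∑ L ∈ lagrangiansOver B (T ⊔ K ∙ u), F L := by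
  have hcard (L : Submodule K V) : Nat.card ↥(W ⊓ L) • F L = ∑ u with u ∈ W ∧ u ∈ L, F L := by
    rw [sum_const, ← card_filter_mem_submodule]
    simp only [Submodule.mem_inf]
  simp only [hcard]
  refine sum_comm' fun L u ↦ ?_
  simp only [mem_lagrangiansOver, mem_filter_univ, sup_le_iff, Submodule.span_singleton_le_iff_mem]
  tauto

/-- Only the vectors `u ∈ W ⊓ Tᗮ` contribute to the double count. -/
lemma sum_card_inf_smul_add [Finite V] {W : Submodule K V} (hT : T ≤ B.orthogonal T) {a b : M}
    (ha : ∑ L ∈ lagrangiansOver B T, F L = a)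
    (hb : ∀ u ∈ W ⊓ B.orthogonal T, u ∉ T → ∑ L ∈ lagrangiansOver B (T ⊔ K ∙ u), F L = b) :
    ∑ L ∈ lagrangiansOver B T, Nat.card ↥(W ⊓ L) • F L + Nat.card ↥(W ⊓ T) • b =
      Nat.card ↥(W ⊓ T) • a + Nat.card ↥(W ⊓ B.orthogonal T) • b := by
  have := Fintype.ofFinite V
  have hperp : ∑ u with u ∈ W, ∑ L ∈ lagrangiansOver B (T ⊔ K ∙ u), F L =
      ∑ u with u ∈ W ⊓ B.orthogonal T, ∑ L ∈ lagrangiansOver B (T ⊔ K ∙ u), F L := by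
    refine (sum_subset (monotone_filter_right _ fun u _ hu ↦ hu.1) fun u hu huT ↦ ?_).symm
    rw [mem_filter_univ] at hu huT
    rw [lagrangiansOver_sup_span_singleton_of_notMem fun h ↦ huT ⟨hu, h⟩, sum_empty]
  rw [sum_card_inf_smul, hperp]
  simp only [← card_filter_mem_submodule]
  refine sum_add_card_smul (monotone_filter_right _ fun u _ hu ↦ ⟨hu.1, hT hu.2⟩) ?_ ?_
  · intro u hu
    rw [lagrangiansOver_sup_span_singleton_of_mem ((mem_filter_univ u).mp hu).2, ha]
  · intro u huW huT
    rw [mem_filter_univ] at huW huT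
    exact hb u huW fun h ↦ huT ⟨huW.1, h⟩

end DoubleCounting

section Moments

variable [Finite V] [Finite K]

theorem card_lagrangiansOver (hB : B.Nondegenerate) (hA : B.IsAlt)
    (hV : Module.finrank K V = 2 * n) (hT : T ≤ B.orthogonal T)
    (hm : Module.finrank K T + m = n) :
    #(lagrangiansOver B T) = lagrangianCount (Nat.card K) m := by
  induction m generalizing T with
  | zero => rw [lagrangiansOver_eq_singleton hB hV hT hm]; rfl
  | succ m ih =>
    have hb (u) (hu : u ∈ (⊤ : Submodule K V) ⊓ B.orthogonal T) (huT : u ∉ T) :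
        ∑ L ∈ lagrangiansOver B (T ⊔ K ∙ u), 1 = lagrangianCount (Nat.card K) m := by
      rw [← card_eq_sum_ones]
      refine ih (sup_span_singleton_le_orthogonal hA hT hu.2) ?_
      rw [Submodule.finrank_sup_span_singleton huT]
      omega
    have hcount := sum_card_inf_smul_add hT (card_eq_sum_ones _).symm hb
    have hLag (L) (hL : L ∈ lagrangiansOver B T) :
        Nat.card ↥((⊤ : Submodule K V) ⊓ L) • 1 = Nat.card K ^ n := by
      rw [top_inf_eq, smul_eq_mul, mul_one, Module.natCard_eq_pow_finrank (K := K),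
        (mem_lagrangiansOver.mp hL).1.finrank_eq hB hV]
    have hperp : Module.finrank K (B.orthogonal T) = Module.finrank K T + 2 * (m + 1) := by
      rw [LinearMap.BilinForm.finrank_orthogonal hB, hV]
      omega
    rw [sum_congr rfl hLag, sum_const, top_inf_eq, top_inf_eq,
      Module.natCard_eq_pow_finrank (K := K) (V := T),
      Module.natCard_eq_pow_finrank (K := K) (V := B.orthogonal T), hperp, ← hm] at hcount
    rw [pow_add _ _ (m + 1), pow_add _ _ (2 * (m + 1)), mul_comm 2, pow_mul] at hcount
    simp only [smul_eq_mul] at hcount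
    have hq : 1 < Nat.card K ^ (m + 1) := Nat.one_lt_pow m.succ_ne_zero Finite.one_lt_card
    have hz : 0 < Nat.card K ^ Module.finrank K T := pow_pos Nat.card_pos _
    obtain ⟨y, hy⟩ := Nat.exists_eq_add_of_lt hq
    rw [hy] at hcount
    rw [lagrangianCount_succ, hy]
    refine Nat.eq_of_mul_eq_mul_left (Nat.mul_pos hz y.succ_pos) ?_
    linarith

theorem sum_card_inf_lagrangiansOver (hB : B.Nondegenerate) (hA : B.IsAlt)
    (hV : Module.finrank K V = 2 * n) (hT : T ≤ B.orthogonal T)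
    (hL : IsLagrangian B L) (hm : Module.finrank K T + (m + 1) = n) :
    ∑ L' ∈ lagrangiansOver B T, Nat.card ↥(L ⊓ L') =
      2 * Nat.card K ^ (m + 1) * lagrangianCount (Nat.card K) m * Nat.card ↥(L ⊓ T) := by
  have hb (u) (hu : u ∈ L ⊓ B.orthogonal T) (huT : u ∉ T) :
      ∑ L ∈ lagrangiansOver B (T ⊔ K ∙ u), 1 = lagrangianCount (Nat.card K) m := by
    rw [← card_eq_sum_ones]
    refine card_lagrangiansOver hB hA hV (sup_span_singleton_le_orthogonal hA hT hu.2) ?_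
    rw [Submodule.finrank_sup_span_singleton huT]
    omega
  have hcount := sum_card_inf_smul_add hT (card_eq_sum_ones _).symm hb
  rw [card_lagrangiansOver hB hA hV hT hm, lagrangianCount_succ,
    hL.card_inf_orthogonal hB hV hm] at hcount
  simp only [smul_eq_mul, mul_one] at hcount
  linarith

theorem sum_card_inf_sq_lagrangiansOver (hB : B.Nondegenerate) (hA : B.IsAlt)
    (hV : Module.finrank K V = 2 * n) (hT : T ≤ B.orthogonal T)
    (hL : IsLagrangian B L) (hm : Module.finrank K T + (m + 2) = n) :
    ∑ L' ∈ lagrangiansOver B T, Nat.card ↥(L ⊓ L') ^ 2 =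
      2 * (Nat.card K + 1) * Nat.card K ^ (2 * m + 3) * lagrangianCount (Nat.card K) m *
        Nat.card ↥(L ⊓ T) ^ 2 := by
  have hb (u) (hu : u ∈ L ⊓ B.orthogonal T) (huT : u ∉ T) :
      ∑ L' ∈ lagrangiansOver B (T ⊔ K ∙ u), Nat.card ↥(L ⊓ L') =
        2 * Nat.card K ^ (m + 1) * lagrangianCount (Nat.card K) m *
          (Nat.card K * Nat.card ↥(L ⊓ T)) := by
    rw [← card_inf_sup_span_singleton hu.1 huT]
    refine sum_card_inf_lagrangiansOver hB hA hV (sup_span_singleton_le_orthogonal hA hT hu.2) hL ?_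
    rw [Submodule.finrank_sup_span_singleton huT]
    omega
  have hcount := sum_card_inf_smul_add hT
    (sum_card_inf_lagrangiansOver hB hA hV hT hL (m := m + 1) hm) hb
  rw [lagrangianCount_succ, hL.card_inf_orthogonal hB hV hm] at hcount
  simp only [smul_eq_mul, ← sq] at hcount
  refine Nat.add_right_cancel (hcount.trans ?_)
  ring

end Moments

end Counting
end SymplecticSpace

section Eigenvectors

variable {K V : Type*} [Field K] [AddCommGroup V] [Module K V]
  [Fintype (Submodule K V)] {B : LinearMap.BilinForm K V} {T : Submodule K V} {n k : ℕ}
  {f v : Submodule K V → ℝ} {μ : ℝ}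

lemma card_planes_mul [Finite K] [Finite V] (W : Submodule K V) :
    ((Nat.card K : ℝ) ^ 2 - 1) * ((Nat.card K : ℝ) ^ 2 - Nat.card K) *
        #{U | U ≤ W ∧ Module.finrank K U = 2} =
      ((Nat.card W : ℝ) - 1) * (Nat.card W - Nat.card K) := by
  have hq : 1 ≤ Nat.card K := Nat.card_pos
  have hcount := congrArg (Nat.cast (R := ℝ)) (card_finrank_eq_mul W 2)
  rw [Fin.prod_univ_two, Fin.prod_univ_two, ← Module.natCard_eq_pow_finrank] at hcount
  simp only [Fin.val_zero, Fin.val_one, pow_zero, pow_one, Nat.cast_mul] at hcount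
  rw [Nat.cast_sub (Nat.one_le_pow _ _ hq), Nat.cast_sub (Nat.le_self_pow two_ne_zero _),
    Nat.cast_pow, Nat.cast_one] at hcount
  rw [mul_comm, hcount]
  rcases eq_or_ne (Module.finrank K W) 0 with h0 | h0
  · simp [Module.natCard_eq_pow_finrank (K := K) (V := W), h0]
  · have hqW : Nat.card K ≤ Nat.card W := by
      rw [Module.natCard_eq_pow_finrank (K := K) (V := W)]
      exact Nat.le_self_pow h0 _
    rw [Nat.cast_sub (hq.trans hqW), Nat.cast_sub hqW, Nat.cast_one]

/-- The sum of `f` over the Lagrangian subspaces containing `T`. -/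
noncomputable def lagrangianSum (B : LinearMap.BilinForm K V) (f : Submodule K V → ℝ)
    (T : Submodule K V) : ℝ := ∑ L ∈ lagrangiansOver B T, f L

/-- An eigenvector `(f, v)` with eigenvalue `μ` of the containment graph between the Lagrangian
subspaces (values `f`) and the isotropic planes (values `v`); the values of `f` and `v` at other
subspaces are immaterial. -/
structure IsContainmentEigenvector (B : LinearMap.BilinForm K V) (f v : Submodule K V → ℝ)
    (μ : ℝ) : Prop where
  lagrangianSum_eq : ∀ t, t ≤ B.orthogonal t → Module.finrank K t = 2 →
    lagrangianSum B f t = μ * v t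
  sum_planes_eq : ∀ L, IsLagrangian B L →
    ∑ t with t ≤ L ∧ Module.finrank K t = 2, v t = μ * f L
  ne_zero : (∃ L, IsLagrangian B L ∧ f L ≠ 0) ∨
    ∃ t, t ≤ B.orthogonal t ∧ Module.finrank K t = 2 ∧ v t ≠ 0

theorem IsContainmentEigenvector.eq_zero_of_lagrangianSum_eq_zero
    (h : IsContainmentEigenvector B f v μ)
    (hzero : ∀ t, t ≤ B.orthogonal t → Module.finrank K t = 2 → lagrangianSum B f t = 0) :
    μ = 0 := by
  by_contra hμ
  have hv (t) (ht : t ≤ B.orthogonal t) (ht2 : Module.finrank K t = 2) : v t = 0 :=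
    (mul_eq_zero_iff_left hμ).mp ((h.lagrangianSum_eq t ht ht2).symm.trans (hzero t ht ht2))
  rcases h.ne_zero with ⟨L, hL, hfL⟩ | ⟨t, ht, ht2, hvt⟩
  · refine hfL ((mul_eq_zero_iff_left hμ).mp ((h.sum_planes_eq L hL).symm.trans ?_))
    refine sum_eq_zero fun t htL ↦ ?_
    obtain ⟨htL, ht2⟩ := (mem_filter_univ t).mp htL
    exact hv t (htL.trans (hL.le_orthogonal htL)) ht2
  · exact hvt (hv t ht ht2)

section Moments

variable [Fintype V]

lemma sum_card_inf_mul_lagrangianSum (f : Submodule K V → ℝ) (T : Submodule K V) :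
    ∑ L ∈ lagrangiansOver B ⊥, (Nat.card ↥(L ⊓ T) : ℝ) * f L =
      ∑ u with u ∈ T, lagrangianSum B f (K ∙ u) := by
  simpa only [nsmul_eq_mul, inf_comm T, bot_sup_eq, lagrangianSum] using sum_card_inf_smul f T ⊥

lemma sum_card_inf_sq_mul_lagrangianSum (f : Submodule K V → ℝ) (T : Submodule K V) :
    ∑ L ∈ lagrangiansOver B ⊥, (Nat.card ↥(L ⊓ T) : ℝ) ^ 2 * f L =
      ∑ u with u ∈ T, ∑ w with w ∈ T, lagrangianSum B f (K ∙ u ⊔ K ∙ w) := by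
  have h := sum_card_inf_smul (B := B) (fun L ↦ Nat.card ↥(T ⊓ L) • f L) T ⊥
  simp only [bot_sup_eq, sum_card_inf_smul f] at h
  simp only [lagrangianSum, ← h, nsmul_eq_mul, inf_comm T, sq, mul_assoc]

lemma sum_lagrangianSum_span_of_finrank_eq_one (hT : Module.finrank K T = 1)
    (hbot : lagrangianSum B f ⊥ = 0) :
    ∑ u with u ∈ T, lagrangianSum B f (K ∙ u) = (Nat.card K - 1) * lagrangianSum B f T := by
  rw [sum_mem_submodule (bot_le (a := T)) (a := 0) (b := lagrangianSum B f T),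
    Module.natCard_eq_pow_finrank (K := K) (V := T), hT]
  · simp
  · intro u hu
    rw [(Submodule.mem_bot K).mp hu, Submodule.span_zero_singleton, hbot]
  · intro u hu hu0
    rw [span_singleton_eq_of_finrank_eq_one hT hu hu0]

lemma sum_sum_lagrangianSum_of_finrank_eq_one (hT : Module.finrank K T = 1)
    (hbot : lagrangianSum B f ⊥ = 0) :
    ∑ u with u ∈ T, ∑ w with w ∈ T, lagrangianSum B f (K ∙ u ⊔ K ∙ w) =
      ((Nat.card K : ℝ) ^ 2 - 1) * lagrangianSum B f T := by
  rw [sum_mem_submodule (bot_le (a := T)) (a := (Nat.card K - 1) * lagrangianSum B f T)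
    (b := Nat.card K * lagrangianSum B f T), Module.natCard_eq_pow_finrank (K := K) (V := T), hT]
  · simp only [Nat.card_unique, Nat.cast_one, pow_one]
    ring
  · intro u hu
    simp only [(Submodule.mem_bot K).mp hu, Submodule.span_zero_singleton, bot_sup_eq,
      sum_lagrangianSum_span_of_finrank_eq_one hT hbot]
  · intro u hu hu0
    rw [span_singleton_eq_of_finrank_eq_one hT hu hu0]
    have hsup (w) (hw : w ∈ ({w | w ∈ T} : Finset V)) :
        lagrangianSum B f (T ⊔ K ∙ w) = lagrangianSum B f T := by
      rw [sup_eq_left.mpr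
        ((Submodule.span_singleton_le_iff_mem w T).mpr ((mem_filter_univ w).mp hw))]
    rw [sum_congr rfl hsup, sum_const, card_filter_mem_submodule, nsmul_eq_mul,
      Module.natCard_eq_pow_finrank (K := K) (V := T), hT, pow_one]

lemma sum_sum_lagrangianSum_of_finrank_eq_two [FiniteDimensional K V]
    (hT : Module.finrank K T = 2)
    (hspan : ∀ u ∈ T, lagrangianSum B f (K ∙ u) = 0) :
    ∑ u with u ∈ T, ∑ w with w ∈ T, lagrangianSum B f (K ∙ u ⊔ K ∙ w) =
      ((Nat.card K : ℝ) ^ 2 - 1) * ((Nat.card K : ℝ) ^ 2 - Nat.card K) *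
        lagrangianSum B f T := by
  have hcard : (Nat.card T : ℝ) = (Nat.card K : ℝ) ^ 2 := by
    rw [Module.natCard_eq_pow_finrank (K := K) (V := T), hT, Nat.cast_pow]
  rw [sum_mem_submodule (bot_le (a := T)) (a := 0)
    (b := ((Nat.card K : ℝ) ^ 2 - Nat.card K) * lagrangianSum B f T), hcard]
  · simp only [Nat.card_unique, Nat.cast_one]
    ring
  · intro u hu
    refine sum_eq_zero fun w hw ↦ ?_
    rw [(Submodule.mem_bot K).mp hu, Submodule.span_zero_singleton, bot_sup_eq,
      hspan w ((mem_filter_univ w).mp hw)]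
  · intro u hu hu0
    have hu1 : Module.finrank K (K ∙ u) = 1 := finrank_span_singleton hu0
    have huT : K ∙ u ≤ T := (Submodule.span_singleton_le_iff_mem u T).mpr hu
    rw [sum_mem_submodule huT (a := 0) (b := lagrangianSum B f T), hcard,
      Module.natCard_eq_pow_finrank (K := K) (V := ↥(K ∙ u)), hu1]
    · simp
    · intro w hw
      rw [sup_eq_left.mpr ((Submodule.span_singleton_le_iff_mem w _).mpr hw), hspan u hu]
    · intro w hw hwu
      congr 1
      refine Submodule.eq_of_le_of_finrank_eq
        (sup_le huT ((Submodule.span_singleton_le_iff_mem w T).mpr hw)) ?_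
      rw [Submodule.finrank_sup_span_singleton hwu, hu1, hT]

end Moments

section Eigenvalues

variable [Finite K] [Finite V]

lemma IsContainmentEigenvector.sq_mul (h : IsContainmentEigenvector B f v μ)
    {L : Submodule K V} (hL : IsLagrangian B L) :
    ((Nat.card K : ℝ) ^ 2 - 1) * ((Nat.card K : ℝ) ^ 2 - Nat.card K) * μ ^ 2 * f L =
      ∑ L' ∈ lagrangiansOver B ⊥,
        ((Nat.card ↥(L' ⊓ L) : ℝ) - 1) * (Nat.card ↥(L' ⊓ L) - Nat.card K) * f L' := by
  have hwalk : μ ^ 2 * f L = ∑ L' ∈ lagrangiansOver B ⊥,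
      #{t | t ≤ L' ⊓ L ∧ Module.finrank K t = 2} * f L' := by
    calc μ ^ 2 * f L = ∑ t with t ≤ L ∧ Module.finrank K t = 2, μ * v t := by
          rw [← mul_sum, h.sum_planes_eq L hL, sq, mul_assoc]
      _ = ∑ t with t ≤ L ∧ Module.finrank K t = 2, ∑ L' ∈ lagrangiansOver B t, f L' := by
          refine sum_congr rfl fun t ht ↦ ?_
          obtain ⟨htL, ht2⟩ := (mem_filter_univ t).mp ht
          exact (h.lagrangianSum_eq t (htL.trans (hL.le_orthogonal htL)) ht2).symm
      _ = ∑ L' ∈ lagrangiansOver B ⊥, ∑ t with t ≤ L' ⊓ L ∧ Module.finrank K t = 2, f L' := by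
          refine sum_comm' fun t L' ↦ ?_
          simp only [mem_lagrangiansOver, mem_filter_univ, le_inf_iff, bot_le, and_true]
          tauto
      _ = _ := by simp only [sum_const, nsmul_eq_mul]
  rw [mul_assoc, hwalk, mul_sum]
  exact sum_congr rfl fun L' _ ↦ by rw [← mul_assoc, card_planes_mul]

theorem IsContainmentEigenvector.sq_mul_lagrangianSum (h : IsContainmentEigenvector B f v μ)
    (hB : B.Nondegenerate) (hA : B.IsAlt) (hV : Module.finrank K V = 2 * n)
    (hT : T ≤ B.orthogonal T)
    (hk : Module.finrank K T + (k + 2) = n) :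
    ((Nat.card K : ℝ) ^ 2 - 1) * ((Nat.card K : ℝ) ^ 2 - Nat.card K) * μ ^ 2 *
        lagrangianSum B f T =
      2 * (Nat.card K + 1) * (Nat.card K : ℝ) ^ (2 * k + 3) * lagrangianCount (Nat.card K) k *
          ∑ L ∈ lagrangiansOver B ⊥, (Nat.card ↥(L ⊓ T) : ℝ) ^ 2 * f L -
        (Nat.card K + 1) * (2 * (Nat.card K : ℝ) ^ (k + 2) *
          lagrangianCount (Nat.card K) (k + 1)) *
          ∑ L ∈ lagrangiansOver B ⊥, (Nat.card ↥(L ⊓ T) : ℝ) * f L +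
        Nat.card K * lagrangianCount (Nat.card K) (k + 2) * lagrangianSum B f ⊥ := by
  have hmoments (L') (hL' : L' ∈ lagrangiansOver B ⊥) :
      ∑ L ∈ lagrangiansOver B T,
        ((Nat.card ↥(L' ⊓ L) : ℝ) - 1) * (Nat.card ↥(L' ⊓ L) - Nat.card K) =
      2 * (Nat.card K + 1) * (Nat.card K : ℝ) ^ (2 * k + 3) * lagrangianCount (Nat.card K) k *
          (Nat.card ↥(L' ⊓ T) : ℝ) ^ 2 -
        (Nat.card K + 1) * (2 * (Nat.card K : ℝ) ^ (k + 2) *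
          lagrangianCount (Nat.card K) (k + 1)) * (Nat.card ↥(L' ⊓ T) : ℝ) +
        Nat.card K * lagrangianCount (Nat.card K) (k + 2) := by
    have hL := (mem_lagrangiansOver.mp hL').1
    have h0 := card_lagrangiansOver hB hA hV hT hk
    have h1 := congrArg (Nat.cast (R := ℝ)) (sum_card_inf_lagrangiansOver hB hA hV hT hL hk)
    have h2 := congrArg (Nat.cast (R := ℝ)) (sum_card_inf_sq_lagrangiansOver hB hA hV hT hL hk)
    push_cast at h1 h2
    have hexpand (L : Submodule K V) :
        ((Nat.card ↥(L' ⊓ L) : ℝ) - 1) * (Nat.card ↥(L' ⊓ L) - Nat.card K) =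
          (Nat.card ↥(L' ⊓ L) : ℝ) ^ 2 - (Nat.card K + 1) * Nat.card ↥(L' ⊓ L) + Nat.card K := by
      ring
    simp only [hexpand, sum_add_distrib, sum_sub_distrib, ← mul_sum, h1, h2, sum_const, h0,
      nsmul_eq_mul]
    ring
  have hLag (L) (hL : L ∈ lagrangiansOver B T) := h.sq_mul (mem_lagrangiansOver.mp hL).1
  simp only [lagrangianSum]
  rw [mul_sum, sum_congr rfl hLag, sum_comm]
  simp only [← sum_mul]
  rw [sum_congr rfl fun L' hL' ↦ by rw [hmoments L' hL']]
  simp only [add_mul, sub_mul, sum_add_distrib, sum_sub_distrib, mul_assoc, ← mul_sum]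

theorem IsContainmentEigenvector.sq_mul_of_lagrangianSum_bot_ne_zero
    (h : IsContainmentEigenvector B f v μ)
    (hB : B.Nondegenerate) (hA : B.IsAlt) (hV : Module.finrank K V = 2 * n)
    (hk : k + 2 = n)
    (hbot : lagrangianSum B f ⊥ ≠ 0) :
    ((Nat.card K : ℝ) ^ 2 - 1) * ((Nat.card K : ℝ) ^ 2 - Nat.card K) * μ ^ 2 =
      Nat.card K * ((Nat.card K : ℝ) ^ (k + 1) - 1) * ((Nat.card K : ℝ) ^ (k + 2) - 1) *
        lagrangianCount (Nat.card K) k := by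
  have key := h.sq_mul_lagrangianSum hB hA hV bot_le (by rwa [finrank_bot, zero_add])
  simp only [inf_bot_eq, Nat.card_unique, Nat.cast_one, one_pow, one_mul] at key
  simp only [lagrangianCount_succ, Nat.cast_mul, Nat.cast_add, Nat.cast_pow, Nat.cast_one] at key
  refine mul_right_cancel₀ hbot (key.trans ?_)
  rw [← lagrangianSum]
  ring

theorem IsContainmentEigenvector.sq_mul_of_finrank_eq_one (h : IsContainmentEigenvector B f v μ)
    (hB : B.Nondegenerate) (hA : B.IsAlt) (hV : Module.finrank K V = 2 * n)
    (hT : T ≤ B.orthogonal T)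
    (hT1 : Module.finrank K T = 1) (hk : k + 3 = n) (hbot : lagrangianSum B f ⊥ = 0)
    (hne : lagrangianSum B f T ≠ 0) :
    ((Nat.card K : ℝ) ^ 2 - Nat.card K) * μ ^ 2 =
      2 * (Nat.card K : ℝ) ^ (k + 2) * ((Nat.card K : ℝ) ^ (k + 2) - 1) *
        lagrangianCount (Nat.card K) k := by
  have := Fintype.ofFinite V
  have hq : (1 : ℝ) < (Nat.card K : ℝ) ^ 2 :=
    one_lt_pow₀ (Nat.one_lt_cast.mpr Finite.one_lt_card) two_ne_zero
  have key := h.sq_mul_lagrangianSum hB hA hV hT (by rw [hT1, ← hk, add_comm])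
  rw [sum_card_inf_mul_lagrangianSum, sum_card_inf_sq_mul_lagrangianSum,
    sum_lagrangianSum_span_of_finrank_eq_one hT1 hbot,
    sum_sum_lagrangianSum_of_finrank_eq_one hT1 hbot, hbot] at key
  simp only [lagrangianCount_succ, Nat.cast_mul, Nat.cast_add, Nat.cast_pow, Nat.cast_one] at key
  refine mul_left_cancel₀ (sub_pos.mpr hq).ne' (mul_right_cancel₀ hne (Eq.trans ?_ (key.trans ?_)))
  · ring
  · ring

theorem IsContainmentEigenvector.sq_of_finrank_eq_two (h : IsContainmentEigenvector B f v μ)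
    (hB : B.Nondegenerate) (hA : B.IsAlt) (hV : Module.finrank K V = 2 * n)
    (hT : T ≤ B.orthogonal T)
    (hT2 : Module.finrank K T = 2) (hk : k + 4 = n)
    (hspan : ∀ u, lagrangianSum B f (K ∙ u) = 0) (hne : lagrangianSum B f T ≠ 0) :
    μ ^ 2 = 2 * (Nat.card K + 1) * (Nat.card K : ℝ) ^ (2 * k + 3) *
      lagrangianCount (Nat.card K) k := by
  have := Fintype.ofFinite V
  have hbot : lagrangianSum B f ⊥ = 0 := by simpa only [Submodule.span_zero_singleton] using hspan 0
  have hq : (1 : ℝ) < Nat.card K := Nat.one_lt_cast.mpr Finite.one_lt_card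
  have hc : 0 < ((Nat.card K : ℝ) ^ 2 - 1) * ((Nat.card K : ℝ) ^ 2 - Nat.card K) :=
    mul_pos (by nlinarith) (by nlinarith)
  have key := h.sq_mul_lagrangianSum hB hA hV hT (by rw [hT2, ← hk, add_comm])
  rw [sum_card_inf_mul_lagrangianSum, sum_card_inf_sq_mul_lagrangianSum,
    sum_eq_zero fun u _ ↦ hspan u,
    sum_sum_lagrangianSum_of_finrank_eq_two hT2 fun u _ ↦ hspan u, hbot] at key
  refine mul_left_cancel₀ hc.ne' (mul_right_cancel₀ hne (key.trans ?_))
  ring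

theorem IsContainmentEigenvector.eigenvalue_cases (h : IsContainmentEigenvector B f v μ)
    (hB : B.Nondegenerate) (hA : B.IsAlt) (hV : Module.finrank K V = 2 * n)
    (hk : k + 4 = n) :
    μ = 0 ∨
    ((Nat.card K : ℝ) ^ 2 - 1) * ((Nat.card K : ℝ) ^ 2 - Nat.card K) * μ ^ 2 =
      Nat.card K * ((Nat.card K : ℝ) ^ (k + 3) - 1) * ((Nat.card K : ℝ) ^ (k + 4) - 1) *
        lagrangianCount (Nat.card K) (k + 2) ∨
    ((Nat.card K : ℝ) ^ 2 - Nat.card K) * μ ^ 2 =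
      2 * (Nat.card K : ℝ) ^ (k + 3) * ((Nat.card K : ℝ) ^ (k + 3) - 1) *
        lagrangianCount (Nat.card K) (k + 1) ∨
    μ ^ 2 = 2 * (Nat.card K + 1) * (Nat.card K : ℝ) ^ (2 * k + 3) *
      lagrangianCount (Nat.card K) k := by
  by_cases hbot : lagrangianSum B f ⊥ = 0
  swap
  · exact .inr (.inl (h.sq_mul_of_lagrangianSum_bot_ne_zero hB hA hV hk hbot))
  by_cases hline : ∀ u, lagrangianSum B f (K ∙ u) = 0
  swap
  · obtain ⟨u, hu⟩ := not_forall.mp hline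
    have hu0 : u ≠ 0 := by
      rintro rfl
      exact hu (by rwa [Submodule.span_zero_singleton])
    have hiso : K ∙ u ≤ B.orthogonal (K ∙ u) := by
      rw [Submodule.span_singleton_le_iff_mem, mem_orthogonal_span_singleton]
      exact hA u
    exact .inr (.inr (.inl (h.sq_mul_of_finrank_eq_one hB hA hV hiso
      (finrank_span_singleton hu0) hk hbot hu)))
  by_cases hplane : ∀ t, t ≤ B.orthogonal t → Module.finrank K t = 2 → lagrangianSum B f t = 0
  · exact .inl (h.eq_zero_of_lagrangianSum_eq_zero hplane)
  · push Not at hplane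
    obtain ⟨t, ht, ht2, hne⟩ := hplane
    exact .inr (.inr (.inr (h.sq_of_finrank_eq_two hB hA hV ht ht2 hk hline hne)))

end Eigenvalues

end Eigenvectors

section SymplecticForm

variable {n : ℕ} {S : Submodule F2 (PV n)}

lemma symp_comm (a b : PV n) : symp a b = symp b a := by
  simp only [symp, mul_comm, add_comm]

lemma symp_self (a : PV n) : symp a a = 0 := by
  simp only [symp, mul_comm (a.2 _), CharTwo.add_self_eq_zero]

lemma symp_add_left (a b c : PV n) : symp (a + b) c = symp a c + symp b c := by
  simp only [symp, Prod.fst_add, Prod.snd_add, Pi.add_apply, add_mul, sum_add_distrib]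
  ring

lemma symp_smul_left (r : F2) (a c : PV n) : symp (r • a) c = r • symp a c := by
  simp only [symp, Prod.smul_fst, Prod.smul_snd, Pi.smul_apply, smul_eq_mul, mul_add, mul_sum,
    mul_assoc]

/-- The symplectic product as a bilinear form. -/
def sympForm (n : ℕ) : LinearMap.BilinForm F2 (PV n) :=
  LinearMap.mk₂ F2 symp symp_add_left symp_smul_left
    (fun a b c ↦ by simp only [symp_comm a, symp_add_left])
    (fun r a b ↦ by simp only [symp_comm a, symp_smul_left])

lemma sympForm_isAlt : (sympForm n).IsAlt := symp_self

lemma sympForm_nondegenerate : (sympForm n).Nondegenerate := by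
  refine (LinearMap.IsRefl.nondegenerate_iff_separatingLeft sympForm_isAlt.isRefl).mpr ?_
  intro a ha
  ext i
  · have hi : symp a (0, Pi.single i 1) = 0 := ha _
    simpa [symp, Pi.single_apply] using hi
  · have hi : symp a (Pi.single i 1, 0) = 0 := ha _
    simpa [symp, Pi.single_apply] using hi

lemma finrank_PV : Module.finrank F2 (PV n) = 2 * n := by
  rw [Module.finrank_prod, Module.finrank_fin_fun, two_mul]

lemma isIsotropic_iff_le_orthogonal :
    IsIsotropic S ↔ S ≤ (sympForm n).orthogonal S :=
  ⟨fun h y hy x hx ↦ h x hx y hy, fun h x hx _ hy ↦ h hy x hx⟩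

lemma mem_Lset_self_iff : S ∈ Lset n n ↔ IsLagrangian (sympForm n) S := by
  constructor
  · rintro ⟨hS, hn⟩
    exact isLagrangian_of_le_orthogonal sympForm_nondegenerate finrank_PV
      (isIsotropic_iff_le_orthogonal.mp hS) hn
  · intro hS
    exact ⟨isIsotropic_iff_le_orthogonal.mpr hS.ge, hS.finrank_eq sympForm_nondegenerate finrank_PV⟩

end SymplecticForm

section ContainmentGraph

variable {n : ℕ} {w : BVtx n → ℝ} {μ : ℝ}

/-- The extension by zero of a function on the vertices of `B_{n,2}` to all subspaces. -/
noncomputable def extendByZero (w : BVtx n → ℝ) : Submodule F2 (PV n) → ℝ :=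
  Function.extend Subtype.val w 0

lemma extendByZero_apply (w : BVtx n → ℝ) (x : BVtx n) : extendByZero w x = w x :=
  Subtype.val_injective.extend_apply w 0 x

lemma adjB_mulVec (w : BVtx n → ℝ) (x : BVtx n) {s : Finset (Submodule F2 (PV n))}
    (hs : ∀ S, S ∈ s ↔ ∃ y : BVtx n, BAdj x y ∧ y.1 = S) :
    (adjB n).mulVec w x = ∑ S ∈ s, extendByZero w S := by
  have hmap : s = ({y | BAdj x y} : Finset (BVtx n)).map (Function.Embedding.subtype _) := by
    ext S
    simp only [hs, mem_map, mem_filter_univ, Function.Embedding.subtype_apply]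
  simp only [hmap, sum_map, Function.Embedding.subtype_apply, extendByZero_apply, sum_filter]
  simp only [Matrix.mulVec, dotProduct, adjB, adjMat, ite_mul, one_mul, zero_mul]

lemma Lset_disjoint (hn : n ≠ 2) {S : Submodule F2 (PV n)} (h : S ∈ Lset n n) : S ∉ Lset n 2 :=
  fun h' ↦ hn (h.2.symm.trans h'.2)

lemma exists_BAdj_plane_iff (hn : n ≠ 2) (x : BVtx n) (hx : x.1 ∈ Lset n 2)
    (L : Submodule F2 (PV n)) :
    (∃ y : BVtx n, BAdj x y ∧ y.1 = L) ↔ L ∈ lagrangiansOver (sympForm n) x.1 := by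
  rw [mem_lagrangiansOver, ← mem_Lset_self_iff]
  constructor
  · rintro ⟨y, ⟨-, hy, hlt⟩ | ⟨-, hx', -⟩, rfl⟩
    · exact ⟨hy, hlt.le⟩
    · exact absurd hx (Lset_disjoint hn hx')
  · rintro ⟨hL, hle⟩
    refine ⟨⟨L, .inl hL⟩, .inl ⟨hx, hL, lt_of_le_of_ne hle ?_⟩, rfl⟩
    rintro rfl
    exact Lset_disjoint hn hL hx

lemma exists_BAdj_lagrangian_iff (hn : n ≠ 2) (x : BVtx n) (hx : x.1 ∈ Lset n n)
    (t : Submodule F2 (PV n)) :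
    (∃ y : BVtx n, BAdj x y ∧ y.1 = t) ↔ t ≤ x.1 ∧ Module.finrank F2 t = 2 := by
  constructor
  · rintro ⟨y, ⟨hx', -⟩ | ⟨hy, -, hlt⟩, rfl⟩
    · exact absurd hx' (Lset_disjoint hn hx)
    · exact ⟨hlt.le, hy.2⟩
  · rintro ⟨hle, ht⟩
    have htL : t ∈ Lset n 2 := ⟨fun a ha b hb ↦ hx.1 a (hle ha) b (hle hb), ht⟩
    refine ⟨⟨t, .inr htL⟩, .inr ⟨htL, hx, lt_of_le_of_ne hle ?_⟩, rfl⟩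
    rintro rfl
    exact Lset_disjoint hn hx htL

lemma isContainmentEigenvector_of_mulVec_eq (hn : n ≠ 2) (hw : w ≠ 0)
    (hμ : (adjB n).mulVec w = μ • w) :
    IsContainmentEigenvector (sympForm n) (extendByZero w) (extendByZero w) μ where
  lagrangianSum_eq t ht ht2 := by
    let x : BVtx n := ⟨t, .inr ⟨isIsotropic_iff_le_orthogonal.mpr ht, ht2⟩⟩
    have hadj := adjB_mulVec w x fun S ↦
      (exists_BAdj_plane_iff hn x ⟨isIsotropic_iff_le_orthogonal.mpr ht, ht2⟩ S).symm
    rw [hμ, Pi.smul_apply, ← extendByZero_apply w] at hadj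
    exact hadj.symm
  sum_planes_eq L hL := by
    let x : BVtx n := ⟨L, .inl (mem_Lset_self_iff.mpr hL)⟩
    have hadj := adjB_mulVec w x (s := {t | t ≤ L ∧ Module.finrank F2 t = 2}) fun S ↦ by
      rw [mem_filter_univ, exists_BAdj_lagrangian_iff hn x (mem_Lset_self_iff.mpr hL)]
    rw [hμ, Pi.smul_apply, ← extendByZero_apply w] at hadj
    exact hadj.symm
  ne_zero := by
    obtain ⟨x, hx⟩ := Function.ne_iff.mp hw
    rw [← extendByZero_apply w] at hx
    rcases x.2 with hL | ht
    · exact .inl ⟨x, mem_Lset_self_iff.mp hL, hx⟩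
    · exact .inr ⟨x, isIsotropic_iff_le_orthogonal.mp ht.1, ht.2, hx⟩

end ContainmentGraph

section SpectralParameter

lemma specParam_nonneg {X : Type*} [Fintype X] (A : Matrix X X ℝ) : 0 ≤ specParam A := by
  refine Real.sSup_nonneg ?_
  rintro _ ⟨⟨μ, -, rfl⟩, -⟩
  exact abs_nonneg μ

/-- If `κ > R`, an eigenvalue with square `κ` has the largest absolute value and is discarded by
`specParam`. -/
lemma specParam_sq_le {X : Type*} [Fintype X] {A : Matrix X X ℝ} {R κ : ℝ} (hR : 0 ≤ R)
    (h : ∀ μ ∈ eigSet A, μ ^ 2 ≤ R ∨ μ ^ 2 = κ) : specParam A ^ 2 ≤ R := by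
  refine (Real.le_sqrt (specParam_nonneg A) hR).mp (Real.sSup_le ?_ (Real.sqrt_nonneg R))
  rintro _ ⟨⟨μ, hμ, rfl⟩, hne⟩
  refine Real.abs_le_sqrt ((h μ hμ).elim id fun hμκ ↦ ?_)
  by_contra! hlt
  have hmax : IsGreatest (abs '' eigSet A) |μ| := by
    refine ⟨⟨μ, hμ, rfl⟩, ?_⟩
    rintro _ ⟨ν, hν, rfl⟩
    refine sq_le_sq.mp ((h ν hν).elim (fun hνR ↦ hνR.trans hlt.le) fun hνκ ↦ ?_)
    exact (hνκ.trans hμκ.symm).le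
  exact hne hmax.csSup_eq.symm

end SpectralParameter

section Bound

lemma sq_adjB_eigenvalue_le_or_eq (k : ℕ) {μ : ℝ} (hμ : μ ∈ eigSet (adjB (k + 4))) :
    μ ^ 2 ≤ 4 ^ (k + 3) * lagrangianCount 2 (k + 1) ∨
      μ ^ 2 = (2 ^ (k + 3) - 1) * (2 ^ (k + 4) - 1) * lagrangianCount 2 (k + 2) / 3 := by
  obtain ⟨w, hw, hwμ⟩ := hμ
  have hmono : (lagrangianCount 2 k : ℝ) ≤ lagrangianCount 2 (k + 1) := by
    rw [lagrangianCount_succ]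
    exact_mod_cast Nat.le_mul_of_pos_right _ (Nat.succ_pos _)
  have hpow : (4 : ℝ) ^ (k + 3) = 2 ^ (k + 3) * 2 ^ (k + 3) := by rw [← mul_pow]; norm_num
  rcases (isContainmentEigenvector_of_mulVec_eq (by omega) hw hwμ).eigenvalue_cases
    sympForm_nondegenerate sympForm_isAlt finrank_PV rfl with h | h | h | h
  · left
    rw [h, zero_pow two_ne_zero]
    positivity
  all_goals rw [Nat.card_zmod] at h
  all_goals push_cast at h
  · right
    linarith
  · left
    rw [hpow]
    have : (0 : ℝ) ≤ 2 ^ (k + 3) * lagrangianCount 2 (k + 1) := by positivity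
    linarith
  · left
    have hk : (2 : ℝ) ^ (2 * k + 3) * 8 = 4 ^ (k + 3) := by
      rw [pow_add, pow_mul]; ring
    rw [← hk, h]
    calc (2 * (2 + 1) * 2 ^ (2 * k + 3) * lagrangianCount 2 k : ℝ)
        ≤ 8 * 2 ^ (2 * k + 3) * lagrangianCount 2 (k + 1) := by gcongr; norm_num
      _ = 2 ^ (2 * k + 3) * 8 * lagrangianCount 2 (k + 1) := by ring

lemma Qexp_eq (k : ℕ) : Qexp (k + 4) (k + 1) = (k + 2).choose 2 + 2 * (k + 1) + 2 := by
  have hsub : k + 4 - (k + 1) = 3 := by omega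
  rw [Qexp, hsub, ← Nat.choose_two_right, Nat.choose_succ_succ' (k + 1) 1, Nat.choose_one_right]
  ring

lemma four_pow_mul_lagrangianCount_le (k : ℕ) :
    (4 : ℝ) ^ (k + 3) * lagrangianCount 2 (k + 1) ≤ 75 * 2 ^ Qexp (k + 4) (k + 1) := by
  have hcount : (lagrangianCount 2 (k + 1) : ℝ) ≤ 3 * 2 ^ (k + 2).choose 2 := by
    exact_mod_cast lagrangianCount_le le_rfl (k + 1)
  calc (4 : ℝ) ^ (k + 3) * lagrangianCount 2 (k + 1)
      ≤ 4 ^ (k + 3) * (3 * 2 ^ (k + 2).choose 2) := by gcongr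
    _ = 12 * 2 ^ Qexp (k + 4) (k + 1) := by
      rw [Qexp_eq, pow_add (2 : ℝ) _ 2, pow_add (2 : ℝ) _ (2 * (k + 1)), pow_mul]
      ring
    _ ≤ 75 * 2 ^ Qexp (k + 4) (k + 1) := by gcongr; norm_num

end Bound

/-- For `n ≥ 4`, the spectral parameter `λ` of `B_{n,2}` satisfies `λ² ≤ 75·2^{Q(n−3)}`. -/
theorem specParam_B_sq_le :
    ∀ n : ℕ, 4 ≤ n →
      (specParam (adjB n)) ^ 2 ≤ 75 * (2 : ℝ) ^ (Qexp n (n - 3)) := by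
  intro n hn
  obtain ⟨k, rfl⟩ := Nat.exists_eq_add_of_le' hn
  calc specParam (adjB (k + 4)) ^ 2 ≤ 4 ^ (k + 3) * lagrangianCount 2 (k + 1) :=
        specParam_sq_le (by positivity) fun _ ↦ sq_adjB_eigenvalue_le_or_eq k
    _ ≤ 75 * 2 ^ Qexp (k + 4) (k + 1) := four_pow_mul_lagrangianCount_le k
end
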